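/- For all β>1, the critical value satisfies τ(β) ≤ 1 − 1/β, and equality τ(β) = 1 − 1/β holds if and only if β ∈ E_L := E ∪ {β_ℓ^s : s ∈ F_e}. -/

import Mathlib

open Set Filter MeasureTheory Topology

noncomputable section

/-- The β-transformation `x ↦ βx - ⌊βx⌋`. -/
def Tbeta (β x : ℝ) : ℝ := Int.fract (β * x)

/-- The survivor set `K_β(t)`: points of `[0,1)` whose orbit never enters `[0,t)`. -/
def survivor (β t : ℝ) : Set ℝ :=
  {x | x ∈ Set.Ico (0 : ℝ) 1 ∧ ∀ n : ℕ, t ≤ (Tbeta β)^[n] x}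

/-- The set-valued bifurcation set `E_β`. -/
def Ebif (β : ℝ) : Set ℝ :=
  {t | t ∈ Set.Ico (0 : ℝ) 1 ∧ ∀ t' : ℝ, t < t' → survivor β t' ≠ survivor β t}

/-- `(c)_β = Σ_{i≥1} c_i β^{-i}` for an infinite digit sequence (indexed from `0`). -/
def valSeq (β : ℝ) (c : ℕ → ℕ) : ℝ := ∑' i : ℕ, (c i : ℝ) / β ^ (i + 1)

/-- `(w 0^∞)_β` for a finite word `w`. -/
def valWord (β : ℝ) (w : List ℕ) : ℝ :=
  ∑ i ∈ Finset.range w.length, (w.getD i 0 : ℝ) / β ^ (i + 1)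

/-- `w⁺`: increment the last letter of `w`. -/
def wplus (w : List ℕ) : List ℕ := w.dropLast ++ [w.getLast! + 1]

/-- `w⁻`: decrement the last letter of `w`. -/
def wminus (w : List ℕ) : List ℕ := w.dropLast ++ [w.getLast! - 1]

/-- `θ`: increment every digit of `w` by one. -/
def theta (w : List ℕ) : List ℕ := w.map (· + 1)

/-- `L(w)`: the lexicographically largest cyclic permutation of `w`. -/
def maxCyc (w : List ℕ) : List ℕ := ((List.range w.length).map w.rotate).foldl max []

/-- `w^∞`: the periodic sequence with period block `w`. -/
def perSeq (w : List ℕ) : ℕ → ℕ := fun i => w.getD (i % w.length) 0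

/-- The sequence given by the word `w` followed by the sequence `c`. -/
def wordSeq (w : List ℕ) (c : ℕ → ℕ) : ℕ → ℕ :=
  fun i => if i < w.length then w.getD i 0 else c (i - w.length)

/-- Strict lexicographic order `≺` on sequences. -/
def seqLt (x y : ℕ → ℕ) : Prop := ∃ n, (∀ i < n, x i = y i) ∧ x n < y n

/-- Lexicographic order `≼` on sequences. -/
def seqLe (x y : ℕ → ℕ) : Prop := x = y ∨ seqLt x y

/-- The `n`-fold left shift `σⁿ` on sequences. -/
def shiftn (n : ℕ) (x : ℕ → ℕ) : ℕ → ℕ := fun i => x (i + n)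

/-- One step of the Farey recursion: insert the concatenation `w_i w_{i+1}`
between consecutive entries. -/
def fareyInsert : List (List ℕ) → List (List ℕ)
  | [] => []
  | [w] => [w]
  | w :: v :: rest => w :: (w ++ v) :: fareyInsert (v :: rest)

/-- The ordered set `F_n` of Farey words of level `n`. -/
def fareyLevel : ℕ → List (List ℕ)
  | 0 => [[0], [1]]
  | n + 1 => fareyInsert (fareyLevel n)

/-- `F`: all Farey words of length at least two. -/
def FareySet : Set (List ℕ) := {w | (∃ n, w ∈ fareyLevel n) ∧ w ≠ [0] ∧ w ≠ [1]}

/-- `F̂ = F ∪ {1}`. -/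
def FareyHat : Set (List ℕ) := FareySet ∪ {[1]}

/-- The extended Farey set `F_e = {θ^k(w) : w ∈ F̂, k ≥ 0}`. -/
def FareyExt : Set (List ℕ) := {w | ∃ v ∈ FareyHat, ∃ k : ℕ, w = theta^[k] v}

/-- A nonempty word is Lyndon iff it is strictly smaller than each of its nontrivial
cyclic rotations (equivalently: aperiodic and lexicographically smallest among its
cyclic permutations). -/
def IsLyndon (w : List ℕ) : Prop := w ≠ [] ∧ ∀ i, 0 < i → i < w.length → w < w.rotate i

/-- `L_e`: all Lyndon words over `ℕ ∪ {0}` except the single-letter word `0`. -/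
def LyndonExt : Set (List ℕ) := {w | IsLyndon w ∧ w ≠ [0]}

/-- `L`: Lyndon words over `{0,1}` of length at least `2`. -/
def LyndonBin : Set (List ℕ) := {w | IsLyndon w ∧ 2 ≤ w.length ∧ ∀ d ∈ w, d ≤ 1}

/-- The block of `Φ_s` emitted for current digit `d` after previous digit `p`:
`L(s)` for `00`, `s⁻` for `10`, `L(s)⁺` for `01`, `s` for `11`. -/
def phiBlock (s : List ℕ) (p d : ℕ) : List ℕ :=
  if d = 0 then (if p = 0 then maxCyc s else wminus s)
  else (if p = 0 then wplus (maxCyc s) else s)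

def phiAux (s : List ℕ) : ℕ → List ℕ → List ℕ
  | _, [] => []
  | p, d :: rest => phiBlock s p d ++ phiAux s d rest

/-- The substitution `Φ_s` on finite words; `s • r = subst s r`.  An initial digit `0`
produces `s⁻`, an initial digit `1` produces `L(s)⁺`, and thereafter runs
`0^k` resp. `1^l` produce `L(s)^{k-1}` resp. `s^{l-1}`, in accordance with
`Φ_s(0^{k₁}1^{l₁}…) = s⁻ L(s)^{k₁-1} L(s)⁺ s^{l₁-1} …` and
`Φ_s(1^{k₁}0^{l₁}…) = L(s)⁺ s^{k₁-1} s⁻ L(s)^{l₁-1} …`. -/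
def subst (s r : List ℕ) : List ℕ :=
  match r with
  | [] => []
  | d :: rest => phiBlock s (1 - d) d ++ phiAux s d rest

/-- The substitution `Φ_s` on infinite sequences, as the limit of its values
on initial segments (each digit contributes a nonempty block, so the `i`-th letter
is determined by the first `i+1` digits). -/
def phiSeq (s : List ℕ) (c : ℕ → ℕ) : ℕ → ℕ :=
  fun i => (subst s (List.ofFn fun j : Fin (i + 1) => c j)).getD i 0

/-- `Λ_e(m) = {s₁ • s₂ • … • s_m : s₁ ∈ F_e, s₂,…,s_m ∈ F}`. -/
def LambdaE (m : ℕ) : Set (List ℕ) :=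
  {w | ∃ s₁ ∈ FareyExt, ∃ rs : List (List ℕ),
    rs.length = m - 1 ∧ (∀ r ∈ rs, r ∈ FareySet) ∧ w = rs.foldl subst s₁}

/-- `Λ_e = ∪_{m≥1} Λ_e(m)`. -/
def LambdaExt : Set (List ℕ) := ⋃ m ∈ Set.Ici 1, LambdaE m

/-- `β_ℓ^S`: the base `β > 1` with `(L(S)^∞)_β = 1` (it is unique since
`β ↦ (c)_β` is strictly decreasing). -/
def betaL (S : List ℕ) : ℝ :=
  Classical.epsilon fun β : ℝ => 1 < β ∧ valSeq β (perSeq (maxCyc S)) = 1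

/-- `β_*^S`: the base `β > 1` with `(L(S)⁺ S⁻ L(S)^∞)_β = 1`. -/
def betaStar (S : List ℕ) : ℝ :=
  Classical.epsilon fun β : ℝ =>
    1 < β ∧ valSeq β (wordSeq (wplus (maxCyc S) ++ wminus S) (perSeq (maxCyc S))) = 1

/-- `β_r^S`: the base `β > 1` with `(L(S)⁺ S^∞)_β = 1`. -/
def betaR (S : List ℕ) : ℝ :=
  Classical.epsilon fun β : ℝ => 1 < β ∧ valSeq β (wordSeq (wplus (maxCyc S)) (perSeq S)) = 1

/-- The Lyndon/Farey interval `J^S = [β_ℓ^S, β_r^S]`. -/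
def Jint (S : List ℕ) : Set ℝ := Set.Icc (betaL S) (betaR S)

/-- The basic interval `I^S = [β_ℓ^S, β_*^S]`. -/
def Iint (S : List ℕ) : Set ℝ := Set.Icc (betaL S) (betaStar S)

/-- The exceptional set `E = (1,∞) ∖ ∪_{s ∈ F_e} J^s`. -/
def Eexc : Set ℝ := Set.Ioi 1 \ ⋃ s ∈ FareyExt, Jint s

/-- The relative exceptional set `E^S = (J^S ∖ I^S) ∖ ∪_{r ∈ F} J^{S•r}`. -/
def EexcRel (S : List ℕ) : Set ℝ :=
  (Jint S \ Iint S) \ ⋃ r ∈ FareySet, Jint (subst S r)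

/-- The infinitely renormalizable set `E_∞ = ∩_{m≥1} ∪_{S ∈ Λ_e(m)} J^S`. -/
def Einf : Set ℝ := ⋂ m ∈ Set.Ici 1, ⋃ S ∈ LambdaE m, Jint S

/-- `E_L = E ∪ {β_ℓ^s : s ∈ F_e}`. -/
def EL : Set ℝ := Eexc ∪ {x | ∃ s ∈ FareyExt, x = betaL s}

/-- The critical value `τ(β) = min{t > 0 : dim_H K_β(t) = 0}`. -/
def tau (β : ℝ) : ℝ := sInf {t : ℝ | 0 < t ∧ dimH (survivor β t) = 0}

end

/-! ### Abel sums of sequences of linear growth -/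

/-- The sequence `f` grows at most linearly. -/
def LinGrowth (f : ℕ → ℝ) : Prop := ∃ A : ℝ, ∀ j : ℕ, |f j| ≤ A * ((j : ℝ) + 1)

/-- `(1 - 1/β) Σ_j f(j) β^{-j}`: the value in base `β` of the digit sequence whose partial
sums are `f`. -/
noncomputable def abelSum (β : ℝ) (f : ℕ → ℝ) : ℝ := (1 - 1 / β) * ∑' j : ℕ, f j / β ^ j

lemma one_sub_one_div_pos {β : ℝ} (hβ : 1 < β) : 0 < 1 - 1 / β := by
  rw [sub_pos, div_lt_one (by linarith)]
  exact hβ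

lemma summable_succ_div_pow {β : ℝ} (hβ : 1 < β) :
    Summable fun j : ℕ => ((j : ℝ) + 1) / β ^ j := by
  have hr : ‖β⁻¹‖ < 1 := by
    rw [norm_inv, Real.norm_of_nonneg (by linarith)]
    exact inv_lt_one_of_one_lt₀ hβ
  have h := (summable_pow_mul_geometric_of_norm_lt_one 1 hr).add
    (summable_pow_mul_geometric_of_norm_lt_one 0 hr)
  refine h.congr fun j => ?_
  simp [div_eq_mul_inv, add_mul]

lemma LinGrowth.summable {β : ℝ} (hβ : 1 < β) {f : ℕ → ℝ} (hf : LinGrowth f) :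
    Summable fun j : ℕ => f j / β ^ j := by
  obtain ⟨A, hA⟩ := hf
  refine Summable.of_norm_bounded ((summable_succ_div_pow hβ).mul_left A) fun j => ?_
  have hp : 0 < β ^ j := by positivity
  rw [Real.norm_eq_abs, abs_div, abs_of_pos hp, ← mul_div_assoc]
  gcongr
  exact hA j

lemma LinGrowth.add {f g : ℕ → ℝ} (hf : LinGrowth f) (hg : LinGrowth g) :
    LinGrowth fun j => f j + g j := by
  obtain ⟨A, hA⟩ := hf
  obtain ⟨B, hB⟩ := hg
  refine ⟨A + B, fun j => (abs_add_le _ _).trans ?_⟩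
  rw [add_mul]
  exact add_le_add (hA j) (hB j)

lemma LinGrowth.const_mul {f : ℕ → ℝ} (hf : LinGrowth f) (c : ℝ) :
    LinGrowth fun j => c * f j := by
  obtain ⟨A, hA⟩ := hf
  refine ⟨|c| * A, fun j => ?_⟩
  rw [abs_mul, mul_assoc]
  exact mul_le_mul_of_nonneg_left (hA j) (abs_nonneg c)

lemma linGrowth_const (c : ℝ) : LinGrowth fun _ => c := by
  refine ⟨|c|, fun j => ?_⟩
  have : (0 : ℝ) ≤ j := Nat.cast_nonneg j
  nlinarith [abs_nonneg c]

lemma LinGrowth.sub_const {f : ℕ → ℝ} (hf : LinGrowth f) (c : ℝ) :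
    LinGrowth fun j => f j - c := by
  simpa [sub_eq_add_neg] using hf.add (linGrowth_const (-c))

lemma LinGrowth.shift {f : ℕ → ℝ} (hf : LinGrowth f) (a : ℕ) :
    LinGrowth fun j => f (a + j) := by
  obtain ⟨A, hA⟩ := hf
  have hA0 : 0 ≤ A := by simpa using (abs_nonneg _).trans (hA 0)
  refine ⟨A * (a + 1), fun j => (hA _).trans ?_⟩
  rw [mul_assoc]
  refine mul_le_mul_of_nonneg_left ?_ hA0
  have : (0 : ℝ) ≤ j := Nat.cast_nonneg j
  have : (0 : ℝ) ≤ a := Nat.cast_nonneg a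
  push_cast
  nlinarith

lemma abelSum_add {β : ℝ} (hβ : 1 < β) {f g : ℕ → ℝ} (hf : LinGrowth f) (hg : LinGrowth g) :
    abelSum β (fun j => f j + g j) = abelSum β f + abelSum β g := by
  unfold abelSum
  rw [← mul_add, ← (hf.summable hβ).tsum_add (hg.summable hβ)]
  simp only [add_div]

lemma abelSum_const_mul (β c : ℝ) (f : ℕ → ℝ) :
    abelSum β (fun j => c * f j) = c * abelSum β f := by
  unfold abelSum
  simp only [mul_div_assoc, tsum_mul_left]
  ring

lemma tsum_one_div_pow {β : ℝ} (hβ : 1 < β) : ∑' j : ℕ, 1 / β ^ j = (1 - 1 / β)⁻¹ := by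
  have h := tsum_geometric_of_lt_one (r := 1 / β) (by positivity)
    ((div_lt_one (by linarith)).2 hβ)
  simpa [div_pow] using h

lemma abelSum_const {β : ℝ} (hβ : 1 < β) (c : ℝ) : abelSum β (fun _ => c) = c := by
  have h := abelSum_const_mul β c (fun _ => 1)
  simp only [mul_one] at h
  rw [h, abelSum, tsum_one_div_pow hβ, mul_inv_cancel₀ (one_sub_one_div_pos hβ).ne', mul_one]

lemma abelSum_sub_const {β : ℝ} (hβ : 1 < β) {f : ℕ → ℝ} (hf : LinGrowth f) (c : ℝ) :
    abelSum β (fun j => f j - c) = abelSum β f - c := by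
  have h := abelSum_add hβ hf (linGrowth_const (-c))
  simpa [sub_eq_add_neg, abelSum_const hβ] using h

lemma linGrowth_mul_natCast (x : ℝ) : LinGrowth fun j : ℕ => x * (j : ℝ) := by
  refine ⟨|x|, fun j => ?_⟩
  rw [abs_mul, Nat.abs_cast]
  exact mul_le_mul_of_nonneg_left (by linarith) (abs_nonneg x)

lemma abelSum_mul_natCast {β : ℝ} (hβ : 1 < β) (x : ℝ) :
    abelSum β (fun j : ℕ => x * (j : ℝ)) = x / (β - 1) := by
  have hr : ‖β⁻¹‖ < 1 := by
    rw [norm_inv, Real.norm_of_nonneg (by linarith)]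
    exact inv_lt_one_of_one_lt₀ hβ
  rw [abelSum_const_mul, abelSum]
  have h := tsum_coe_mul_geometric_of_norm_lt_one hr
  have h' : ∑' j : ℕ, (j : ℝ) / β ^ j = β⁻¹ / (1 - β⁻¹) ^ 2 := by
    rw [← h]
    simp [div_eq_mul_inv]
  rw [h']
  have : β ≠ 0 := by positivity
  have : β - 1 ≠ 0 := by linarith
  field_simp

lemma abelSum_mono {β : ℝ} (hβ : 1 < β) {f g : ℕ → ℝ} (hf : LinGrowth f) (hg : LinGrowth g)
    (h : ∀ j, f j ≤ g j) : abelSum β f ≤ abelSum β g := by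
  refine mul_le_mul_of_nonneg_left ?_ (one_sub_one_div_pos hβ).le
  refine (hf.summable hβ).tsum_le_tsum (fun j => ?_) (hg.summable hβ)
  have hp : 0 < β ^ j := by positivity
  gcongr
  exact h j

lemma abelSum_lt {β : ℝ} (hβ : 1 < β) {f g : ℕ → ℝ} (hf : LinGrowth f) (hg : LinGrowth g)
    (h : ∀ j, f j ≤ g j) (h' : ∃ j, f j < g j) : abelSum β f < abelSum β g := by
  refine mul_lt_mul_of_pos_left ?_ (one_sub_one_div_pos hβ)
  obtain ⟨i, hi⟩ := h'
  refine (hf.summable hβ).tsum_lt_tsum (i := i) (fun j => ?_) ?_ (hg.summable hβ)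
  · have hp : 0 < β ^ j := by positivity
    show f j / β ^ j ≤ g j / β ^ j
    gcongr
    exact h j
  · have hp : 0 < β ^ i := by positivity
    gcongr

/-- Shifting the digit sequence multiplies its value by `β` and removes the leading digit. -/
lemma mul_abelSum {β : ℝ} (hβ : 1 < β) {f : ℕ → ℝ} (hf : LinGrowth f) (h0 : f 0 = 0) :
    β * abelSum β f = f 1 + abelSum β (fun j => f (1 + j) - f 1) := by
  rw [abelSum_sub_const hβ (hf.shift 1), abelSum, abelSum, (hf.summable hβ).tsum_eq_zero_add]
  have : ∑' j : ℕ, f (j + 1) / β ^ (j + 1) = (1 / β) * ∑' j : ℕ, f (1 + j) / β ^ j := by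
    rw [← tsum_mul_left]
    refine tsum_congr fun j => ?_
    rw [add_comm 1 j, pow_succ]
    field_simp
  rw [this, h0]
  have : β ≠ 0 := by positivity
  field_simp
  ring

lemma valSeq_eq_abelSum {β : ℝ} (hβ : 1 < β) {c : ℕ → ℕ} {f : ℕ → ℝ} (hf : LinGrowth f)
    (h0 : f 0 = 0) (hc : ∀ i, (c i : ℝ) = f (i + 1) - f i) : valSeq β c = abelSum β f := by
  have hs := hf.summable hβ
  have hs1 : Summable fun j : ℕ => f (j + 1) / β ^ (j + 1) :=
    (summable_nat_add_iff 1).2 hs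
  have hs2 : Summable fun j : ℕ => (1 / β) * (f j / β ^ j) := hs.mul_left _
  have : valSeq β c = ∑' j : ℕ, f (j + 1) / β ^ (j + 1) - ∑' j : ℕ, (1 / β) * (f j / β ^ j) := by
    rw [← hs1.tsum_sub hs2, valSeq]
    refine tsum_congr fun j => ?_
    rw [hc, sub_div, pow_succ]
    field_simp
  rw [this, tsum_mul_left, abelSum]
  have h := hs.tsum_eq_zero_add
  rw [h0] at h
  simp only [zero_div, zero_add] at h
  rw [← h]
  ring

/-- The value of a sequence of digits whose partial sums are periodic up to a drift `k`. -/
lemma abelSum_periodic {β : ℝ} (hβ : 1 < β) {f : ℕ → ℝ} (hf : LinGrowth f) {n : ℕ} {k : ℝ}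
    (hper : ∀ j, f (n + j) = f j + k) :
    abelSum β f * (1 - 1 / β ^ n)
      = (1 - 1 / β) * ∑ j ∈ Finset.range n, f j / β ^ j + k / β ^ n := by
  have hs := hf.summable hβ
  have h1 := hs.sum_add_tsum_nat_add n
  have h2 : ∑' j : ℕ, f (j + n) / β ^ (j + n)
      = (1 / β ^ n) * ∑' j : ℕ, (f j + k) / β ^ j := by
    rw [← tsum_mul_left]
    refine tsum_congr fun j => ?_
    rw [add_comm j n, hper, pow_add]
    field_simp
  have h3 := abelSum_add hβ hf (linGrowth_const k)
  rw [abelSum_const hβ] at h3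
  unfold abelSum at h3 ⊢
  rw [h2] at h1
  have h4 : (1 - 1 / β) * ∑' j : ℕ, f j / β ^ j
      = (1 - 1 / β) * ∑ j ∈ Finset.range n, f j / β ^ j
        + (1 / β ^ n) * ((1 - 1 / β) * ∑' j : ℕ, (f j + k) / β ^ j) := by
    rw [← h1]
    ring
  rw [h3] at h4
  linear_combination h4

/-! ### Dependence of the value of a digit sequence on the base -/

lemma summable_valSeq {β : ℝ} (hβ : 1 < β) {c : ℕ → ℕ} {B : ℕ} (hc : ∀ i, c i ≤ B) :
    Summable fun i : ℕ => (c i : ℝ) / β ^ (i + 1) := by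
  have h : LinGrowth fun i => (c i : ℝ) / β := by
    refine ⟨B, fun j => ?_⟩
    rw [abs_of_nonneg (by positivity), div_le_iff₀ (by positivity)]
    have h1 : (c j : ℝ) ≤ B := by exact_mod_cast hc j
    have h2 : (0 : ℝ) ≤ j := Nat.cast_nonneg j
    have h3 : (1 : ℝ) ≤ ((j : ℝ) + 1) * β := by nlinarith
    nlinarith [Nat.cast_nonneg (α := ℝ) B]
  refine (h.summable hβ).congr fun i => ?_
  rw [pow_succ']
  field_simp

lemma valSeq_lt_valSeq {β β' : ℝ} (hβ : 1 < β) (hlt : β < β') {c : ℕ → ℕ} {B : ℕ}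
    (hc : ∀ i, c i ≤ B) (hpos : ∃ i, 0 < c i) : valSeq β' c < valSeq β c := by
  obtain ⟨i, hi⟩ := hpos
  have h0 : 0 < β := by linarith
  refine (summable_valSeq (hβ.trans hlt) hc).tsum_lt_tsum (i := i) (fun j => ?_) ?_
    (summable_valSeq hβ hc)
  · show (c j : ℝ) / β' ^ (j + 1) ≤ (c j : ℝ) / β ^ (j + 1)
    gcongr
  · have : (0 : ℝ) < c i := by exact_mod_cast hi
    have : β ^ (i + 1) < β' ^ (i + 1) := pow_lt_pow_left₀ hlt h0.le (by omega)
    gcongr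

lemma continuousOn_valSeq {a b : ℝ} (ha : 1 < a) {c : ℕ → ℕ} {B : ℕ} (hc : ∀ i, c i ≤ B) :
    ContinuousOn (fun β => valSeq β c) (Icc a b) := by
  refine continuousOn_tsum (fun i => ?_) (summable_valSeq ha hc) fun i x hx => ?_
  · refine continuousOn_const.div (by fun_prop) fun x hx => ?_
    have : 0 < x := by linarith [hx.1]
    positivity
  · have : 0 < x := by linarith [hx.1]
    rw [Real.norm_of_nonneg (by positivity)]
    have := hx.1
    gcongr

/-! ### Values of mechanical sequences -/

/-- The value in base `β` of the lower mechanical sequence of slope `x`. -/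
noncomputable def lowVal (β x : ℝ) : ℝ := abelSum β fun j => (⌊(j : ℝ) * x⌋ : ℝ)

/-- The value in base `β` of the upper mechanical sequence of slope `x`. -/
noncomputable def upVal (β x : ℝ) : ℝ := abelSum β fun j => (⌈(j : ℝ) * x⌉ : ℝ)

lemma abs_floor_natCast_mul_le {x A : ℝ} (hx : |x| ≤ A) (j : ℕ) :
    |(⌊(j : ℝ) * x⌋ : ℝ)| ≤ (A + 1) * ((j : ℝ) + 1) := by
  have hj : (0 : ℝ) ≤ j := Nat.cast_nonneg j
  obtain ⟨h1, h2⟩ := abs_le.1 hx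
  have := Int.floor_le ((j : ℝ) * x)
  have := Int.lt_floor_add_one ((j : ℝ) * x)
  rw [abs_le]
  constructor <;> nlinarith

lemma abs_ceil_natCast_mul_le {x A : ℝ} (hx : |x| ≤ A) (j : ℕ) :
    |(⌈(j : ℝ) * x⌉ : ℝ)| ≤ (A + 1) * ((j : ℝ) + 1) := by
  have hj : (0 : ℝ) ≤ j := Nat.cast_nonneg j
  obtain ⟨h1, h2⟩ := abs_le.1 hx
  have := Int.le_ceil ((j : ℝ) * x)
  have := Int.ceil_lt_add_one ((j : ℝ) * x)
  rw [abs_le]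
  constructor <;> nlinarith

lemma linGrowth_floor (x : ℝ) : LinGrowth fun j => (⌊(j : ℝ) * x⌋ : ℝ) :=
  ⟨|x| + 1, abs_floor_natCast_mul_le le_rfl⟩

lemma linGrowth_ceil (x : ℝ) : LinGrowth fun j => (⌈(j : ℝ) * x⌉ : ℝ) :=
  ⟨|x| + 1, abs_ceil_natCast_mul_le le_rfl⟩

lemma linGrowth_ite : LinGrowth fun j => if j = 0 then (0 : ℝ) else 1 := by
  refine ⟨1, fun j => ?_⟩
  have hj : (0 : ℝ) ≤ j := Nat.cast_nonneg j
  change |if j = 0 then (0 : ℝ) else 1| ≤ 1 * ((j : ℝ) + 1)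
  split_ifs
  · simp
    linarith
  · simp

lemma abelSum_ite {β : ℝ} (hβ : 1 < β) :
    abelSum β (fun j => if j = 0 then (0 : ℝ) else 1) = 1 / β := by
  have h := mul_abelSum hβ linGrowth_ite (by simp)
  have h' : (fun j : ℕ => (if 1 + j = 0 then (0 : ℝ) else 1) - if (1 : ℕ) = 0 then (0 : ℝ) else 1)
      = fun _ => 0 := by
    ext j
    simp
  rw [h', abelSum_const hβ] at h
  rw [eq_div_iff (by positivity), mul_comm, h]
  simp

lemma abelSum_floor_add_ite {β : ℝ} (hβ : 1 < β) (x : ℝ) :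
    abelSum β (fun j => (⌊(j : ℝ) * x⌋ : ℝ) + if j = 0 then 0 else 1) = lowVal β x + 1 / β := by
  rw [abelSum_add hβ (linGrowth_floor x) linGrowth_ite, abelSum_ite hβ, lowVal]

lemma upVal_mono {β : ℝ} (hβ : 1 < β) {x y : ℝ} (h : x ≤ y) : upVal β x ≤ upVal β y := by
  refine abelSum_mono hβ (linGrowth_ceil x) (linGrowth_ceil y) fun j => ?_
  gcongr

lemma upVal_lt {β : ℝ} (hβ : 1 < β) {x y : ℝ} (h : x < y) : upVal β x < upVal β y := by
  refine abelSum_lt hβ (linGrowth_ceil x) (linGrowth_ceil y) (fun j => ?_) ?_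
  · gcongr
  · obtain ⟨j, hj⟩ := exists_nat_gt (1 / (y - x))
    refine ⟨j, ?_⟩
    rw [div_lt_iff₀ (by linarith)] at hj
    have := Int.le_ceil ((j : ℝ) * y)
    have := Int.ceil_lt_add_one ((j : ℝ) * x)
    linarith

lemma le_upVal {β : ℝ} (hβ : 1 < β) (x : ℝ) : x / (β - 1) ≤ upVal β x := by
  rw [← abelSum_mul_natCast hβ]
  refine abelSum_mono hβ (linGrowth_mul_natCast x) (linGrowth_ceil x) fun j => ?_
  rw [mul_comm]
  exact Int.le_ceil _

lemma lowVal_le {β : ℝ} (hβ : 1 < β) (x : ℝ) : lowVal β x ≤ x / (β - 1) := by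
  rw [← abelSum_mul_natCast hβ]
  refine abelSum_mono hβ (linGrowth_floor x) (linGrowth_mul_natCast x) fun j => ?_
  rw [mul_comm x]
  exact Int.floor_le _

lemma upVal_le_lowVal_add {β : ℝ} (hβ : 1 < β) (x : ℝ) : upVal β x ≤ lowVal β x + 1 / β := by
  rw [← abelSum_floor_add_ite hβ]
  refine abelSum_mono hβ (linGrowth_ceil x) ((linGrowth_floor x).add linGrowth_ite) fun j => ?_
  split_ifs with h
  · simp [h]
  · exact_mod_cast Int.ceil_le_floor_add_one _

lemma upVal_zero {β : ℝ} (hβ : 1 < β) : upVal β 0 = 0 := by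
  simpa [upVal] using abelSum_const hβ 0

lemma tendsto_abelSum {β : ℝ} (hβ : 1 < β) {l : Filter ℝ} {F : ℝ → ℕ → ℝ} {g : ℕ → ℝ} {A : ℝ}
    (hA : ∀ᶠ x in l, ∀ j : ℕ, |F x j| ≤ A * ((j : ℝ) + 1))
    (hF : ∀ j, ∀ᶠ x in l, F x j = g j) :
    Tendsto (fun x => abelSum β (F x)) l (𝓝 (abelSum β g)) := by
  refine Tendsto.const_mul _ ?_
  refine tendsto_tsum_of_dominated_convergence ((summable_succ_div_pow hβ).mul_left A)
    (fun j => ?_) ?_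
  · refine (tendsto_const_nhds (x := g j / β ^ j)).congr' ?_
    filter_upwards [hF j] with x hx
    rw [hx]
  · filter_upwards [hA] with x hx j
    have hp : 0 < β ^ j := by positivity
    rw [Real.norm_eq_abs, abs_div, abs_of_pos hp, ← mul_div_assoc]
    gcongr
    exact hx j

lemma eventually_abs_le_nhds (a : ℝ) : ∀ᶠ x in 𝓝 a, |x| ≤ |a| + 1 := by
  have h : Tendsto (fun x : ℝ => |x|) (𝓝 a) (𝓝 |a|) := continuous_abs.tendsto a
  filter_upwards [h.eventually (gt_mem_nhds (lt_add_one |a|))] with x hx using le_of_lt hx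

lemma tendsto_upVal_left {β : ℝ} (hβ : 1 < β) (a : ℝ) :
    Tendsto (upVal β) (𝓝[<] a) (𝓝 (upVal β a)) := by
  refine tendsto_abelSum (A := |a| + 1 + 1) hβ ?_ fun j => ?_
  · filter_upwards [nhdsWithin_le_nhds (eventually_abs_le_nhds a)] with x hx
    exact abs_ceil_natCast_mul_le hx
  · have hc : Tendsto (fun x : ℝ => (j : ℝ) * x) (𝓝 a) (𝓝 ((j : ℝ) * a)) :=
      (continuous_const.mul continuous_id).tendsto a
    have h1 : ((⌈(j : ℝ) * a⌉ : ℝ) - 1) < (j : ℝ) * a := by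
      linarith [Int.ceil_lt_add_one ((j : ℝ) * a)]
    filter_upwards [nhdsWithin_le_nhds (hc.eventually (lt_mem_nhds h1)), self_mem_nhdsWithin]
      with x hx hxa
    have hxa' : x < a := hxa
    have : ⌈(j : ℝ) * x⌉ = ⌈(j : ℝ) * a⌉ := by
      rw [Int.ceil_eq_iff]
      refine ⟨hx, le_trans ?_ (Int.le_ceil _)⟩
      gcongr
    rw [this]

lemma tendsto_lowVal_left {β : ℝ} (hβ : 1 < β) (a : ℝ) :
    Tendsto (lowVal β) (𝓝[<] a) (𝓝 (upVal β a - 1 / β)) := by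
  have hg : upVal β a - 1 / β
      = abelSum β (fun j => (⌈(j : ℝ) * a⌉ : ℝ) + (-1) * if j = 0 then 0 else 1) := by
    rw [abelSum_add hβ (linGrowth_ceil a) (linGrowth_ite.const_mul (-1)), abelSum_const_mul,
      abelSum_ite hβ, upVal]
    ring
  rw [hg]
  refine tendsto_abelSum (A := |a| + 1 + 1) hβ ?_ fun j => ?_
  · filter_upwards [nhdsWithin_le_nhds (eventually_abs_le_nhds a)] with x hx
    exact abs_floor_natCast_mul_le hx
  · rcases Nat.eq_zero_or_pos j with rfl | hj
    · simp
    have hj' : (0 : ℝ) < j := by exact_mod_cast hj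
    have hc : Tendsto (fun x : ℝ => (j : ℝ) * x) (𝓝 a) (𝓝 ((j : ℝ) * a)) :=
      (continuous_const.mul continuous_id).tendsto a
    have h1 : ((⌈(j : ℝ) * a⌉ : ℝ) - 1) < (j : ℝ) * a := by
      linarith [Int.ceil_lt_add_one ((j : ℝ) * a)]
    filter_upwards [nhdsWithin_le_nhds (hc.eventually (lt_mem_nhds h1)), self_mem_nhdsWithin]
      with x hx hxa
    have hxa' : (j : ℝ) * x < j * a := mul_lt_mul_of_pos_left hxa hj'
    have : ⌊(j : ℝ) * x⌋ = ⌈(j : ℝ) * a⌉ - 1 := by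
      rw [Int.floor_eq_iff]
      push_cast
      exact ⟨hx.le, by linarith [Int.le_ceil ((j : ℝ) * a)]⟩
    rw [this, if_neg hj.ne']
    push_cast
    ring

lemma tendsto_upVal_right {β : ℝ} (hβ : 1 < β) (a : ℝ) :
    Tendsto (upVal β) (𝓝[>] a) (𝓝 (lowVal β a + 1 / β)) := by
  rw [← abelSum_floor_add_ite hβ]
  refine tendsto_abelSum (A := |a| + 1 + 1) hβ ?_ fun j => ?_
  · filter_upwards [nhdsWithin_le_nhds (eventually_abs_le_nhds a)] with x hx
    exact abs_ceil_natCast_mul_le hx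
  · rcases Nat.eq_zero_or_pos j with rfl | hj
    · simp
    have hj' : (0 : ℝ) < j := by exact_mod_cast hj
    have hc : Tendsto (fun x : ℝ => (j : ℝ) * x) (𝓝 a) (𝓝 ((j : ℝ) * a)) :=
      (continuous_const.mul continuous_id).tendsto a
    filter_upwards [nhdsWithin_le_nhds (hc.eventually
      (gt_mem_nhds (Int.lt_floor_add_one ((j : ℝ) * a)))), self_mem_nhdsWithin] with x hx hxa
    have hxa' : (j : ℝ) * a < j * x := mul_lt_mul_of_pos_left hxa hj'
    have : ⌈(j : ℝ) * x⌉ = ⌊(j : ℝ) * a⌋ + 1 := by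
      rw [Int.ceil_eq_iff]
      push_cast
      exact ⟨by linarith [Int.floor_le ((j : ℝ) * a)], hx.le⟩
    rw [this, if_neg hj.ne']
    push_cast
    ring

/-- Either some upper mechanical sequence has value exactly `1` in base `β`, or the value jumps
over `1` at a positive rational slope. -/
lemma exists_upVal_eq_one_or_jump {β : ℝ} (hβ : 1 < β) :
    (∃ a, upVal β a = 1) ∨ ∃ k n : ℕ, 0 < k ∧ 0 < n ∧ k.Coprime n ∧
      upVal β (k / n) < 1 ∧ 1 ≤ lowVal β (k / n) + 1 / β := by
  set Z : Set ℝ := {x | upVal β x ≤ 1} with hZ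
  have hbdd : BddAbove Z := by
    refine ⟨β - 1, fun x hx => ?_⟩
    have h := (le_upVal hβ x).trans hx
    rwa [div_le_one (by linarith)] at h
  have h0 : (0 : ℝ) ∈ Z := by simp [hZ, upVal_zero hβ]
  set a := sSup Z with ha
  have ha0 : 0 ≤ a := le_csSup hbdd h0
  have hlow : upVal β a ≤ 1 := by
    refine le_of_tendsto (tendsto_upVal_left hβ a) ?_
    filter_upwards [self_mem_nhdsWithin] with x hx
    obtain ⟨y, hy, hxy⟩ := exists_lt_of_lt_csSup ⟨0, h0⟩ hx
    exact (upVal_mono hβ hxy.le).trans hy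
  have hup : 1 ≤ lowVal β a + 1 / β := by
    refine ge_of_tendsto (tendsto_upVal_right hβ a) ?_
    filter_upwards [self_mem_nhdsWithin] with x hx
    by_contra hcon
    exact absurd (le_csSup hbdd (show x ∈ Z from (not_le.1 hcon).le)) (not_le.2 hx)
  rcases hlow.lt_or_eq with hlt | heq
  swap
  · exact Or.inl ⟨a, heq⟩
  right
  have hapos : 0 < a := by
    refine ha0.lt_of_ne fun h => ?_
    rw [← h] at hup
    have h1 := lowVal_le hβ 0
    have h2 := one_sub_one_div_pos hβ
    simp only [zero_div] at h1
    linarith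
  have hrat : ∃ j : ℕ, 0 < j ∧ (⌈(j : ℝ) * a⌉ : ℝ) = j * a := by
    by_contra! hirr
    refine absurd hup (not_le.2 (lt_of_le_of_lt ?_ hlt))
    rw [← abelSum_floor_add_ite hβ]
    refine abelSum_mono hβ ((linGrowth_floor a).add linGrowth_ite) (linGrowth_ceil a) fun j => ?_
    split_ifs with hj
    · simp [hj]
    · have h1 := hirr j (Nat.pos_of_ne_zero hj)
      have h2 : (⌊(j : ℝ) * a⌋ : ℝ) < ⌈(j : ℝ) * a⌉ :=
        (Int.floor_le _).trans_lt ((Int.le_ceil _).lt_of_ne h1.symm)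
      exact_mod_cast h2
  obtain ⟨j, hj, hja⟩ := hrat
  have hj' : (0 : ℝ) < j := by exact_mod_cast hj
  set q : ℚ := (⌈(j : ℝ) * a⌉ : ℚ) / j with hq
  have hqa : (q : ℝ) = a := by
    rw [hq]
    push_cast
    rw [hja]
    field_simp
  have hqpos : 0 < q := by
    have : (0 : ℝ) < q := by rw [hqa]; exact hapos
    exact_mod_cast this
  have hnum : (q.num.natAbs : ℝ) / q.den = a := by
    rw [← hqa, Rat.cast_def]
    congr 1
    rw [Nat.cast_natAbs, abs_of_pos (Rat.num_pos.2 hqpos)]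
  refine ⟨q.num.natAbs, q.den, Int.natAbs_pos.2 (Rat.num_pos.2 hqpos).ne', q.den_pos,
    q.reduced, ?_, ?_⟩ <;> rw [hnum] <;> assumption

lemma exists_slopes {β a t : ℝ} (hβ : 1 < β) (ha : upVal β a = 1) (ht : t < 1 - 1 / β) :
    ∃ x₁ x₂ : ℝ, x₁ < x₂ ∧ t ≤ lowVal β x₁ ∧ upVal β x₂ < 1 := by
  have h := tendsto_lowVal_left hβ a
  rw [ha] at h
  obtain ⟨x, hx, hxa⟩ := ((h.eventually (lt_mem_nhds ht)).and self_mem_nhdsWithin).exists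
  have hxa' : x < a := hxa
  refine ⟨x, (x + a) / 2, by linarith, hx.le, ?_⟩
  rw [← ha]
  exact upVal_lt hβ (by linarith)

/-! ### The survivor set at `1 - 1/β` has dimension zero -/

lemma Tbeta_mem_survivor {β t x : ℝ} (hx : x ∈ survivor β t) : Tbeta β x ∈ survivor β t := by
  refine ⟨⟨Int.fract_nonneg _, Int.fract_lt_one _⟩, fun n => ?_⟩
  rw [← Function.iterate_succ_apply]
  exact hx.2 (n + 1)

lemma iterate_Tbeta_mem_survivor {β t x : ℝ} (hx : x ∈ survivor β t) (n : ℕ) :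
    (Tbeta β)^[n] x ∈ survivor β t := by
  induction n with
  | zero => exact hx
  | succ n ih =>
    rw [Function.iterate_succ_apply']
    exact Tbeta_mem_survivor ih

lemma le_of_mem_survivor {β t x : ℝ} (hx : x ∈ survivor β t) : t ≤ x := hx.2 0

/-- Away from `n` cut points, nearby points of the survivor set at `1 - 1/β` stay together for
`n` steps. -/
lemma exists_cuts {β : ℝ} (hβ : 1 < β) (n : ℕ) :
    ∃ D : Finset ℝ, D.card ≤ n ∧ ∀ x ∈ survivor β (1 - 1 / β), ∀ y ∈ survivor β (1 - 1 / β),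
      x < y → (∀ d ∈ D, ¬(x < d ∧ d ≤ y)) → y - x ≤ (β ^ n)⁻¹ := by
  have hβ0 : 0 < β := by linarith
  induction n with
  | zero =>
    refine ⟨∅, by simp, fun x hx y hy _ _ => ?_⟩
    have := hx.1.1
    have := hy.1.2
    simp
    linarith
  | succ n ih =>
    obtain ⟨D, hDn, hD⟩ := ih
    set m : ℤ := ⌈β - 1⌉ with hm
    have hm1 : β - 1 ≤ m := Int.le_ceil _
    have hm2 : (m : ℝ) < β := by linarith [Int.ceil_lt_add_one (β - 1)]
    have hlow : ∀ x ∈ survivor β (1 - 1 / β), β - 1 ≤ β * x := fun x hx => by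
      have h := mul_le_mul_of_nonneg_left (le_of_mem_survivor hx) hβ0.le
      rwa [mul_sub, mul_one_div_cancel hβ0.ne', mul_one] at h
    have hhigh : ∀ x ∈ survivor β (1 - 1 / β), β * x < β := fun x hx => by
      have := mul_lt_mul_of_pos_left hx.1.2 hβ0
      linarith
    classical
    refine ⟨insert (m / β) (D.image fun d => if d + m < β then (d + m) / β else (d + m - 1) / β),
      (Finset.card_insert_le _ _).trans (Nat.succ_le_succ (Finset.card_image_le.trans hDn)),
      fun x hx y hy hxy hcut => ?_⟩
    have hxy' : β * x < β * y := mul_lt_mul_of_pos_left hxy hβ0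
    have hc : ¬(β * x < m ∧ (m : ℝ) ≤ β * y) := by
      have h := hcut (m / β) (Finset.mem_insert_self _ _)
      rwa [lt_div_iff₀' hβ0, div_le_iff₀' hβ0] at h
    obtain ⟨f, hf, hfx, hfy⟩ : ∃ f : ℤ, (f = m ∨ f = m - 1) ∧ ⌊β * x⌋ = f ∧ ⌊β * y⌋ = f := by
      have hx1 := hlow x hx
      have hy2 := hhigh y hy
      by_cases hmx : (m : ℝ) ≤ β * x
      · refine ⟨m, Or.inl rfl, Int.floor_eq_iff.2 ⟨hmx, ?_⟩, Int.floor_eq_iff.2 ⟨?_, ?_⟩⟩ <;>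
          linarith
      · have hmy : β * y < m := by
          by_contra h
          exact hc ⟨not_le.1 hmx, not_lt.1 h⟩
        refine ⟨m - 1, Or.inr rfl, Int.floor_eq_iff.2 ⟨?_, ?_⟩, Int.floor_eq_iff.2 ⟨?_, ?_⟩⟩ <;>
          push_cast <;> linarith
    have hTx : Tbeta β x = β * x - f := by rw [Tbeta, Int.fract, hfx]
    have hTy : Tbeta β y = β * y - f := by rw [Tbeta, Int.fract, hfy]
    have key := hD _ (Tbeta_mem_survivor hx) _ (Tbeta_mem_survivor hy) (by linarith) ?_
    · have h3 : β * (y - x) ≤ (β ^ n)⁻¹ := by linarith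
      rw [pow_succ', mul_inv, inv_mul_eq_div, le_div_iff₀' hβ0]
      exact h3
    · rintro d hd ⟨h1, h2⟩
      have h := hcut _ (Finset.mem_insert_of_mem (Finset.mem_image_of_mem _ hd))
      have hx1 := hlow x hx
      have hy2 := hhigh y hy
      rcases hf with rfl | rfl
      · rw [if_pos (by linarith), lt_div_iff₀' hβ0, div_le_iff₀' hβ0] at h
        exact h ⟨by linarith, by linarith⟩
      · push_cast at hTx hTy
        rw [if_neg (by linarith), lt_div_iff₀' hβ0, div_le_iff₀' hβ0] at h
        exact h ⟨by linarith, by linarith⟩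

lemma dimH_survivor_one_sub_inv {β : ℝ} (hβ : 1 < β) : dimH (survivor β (1 - 1 / β)) = 0 := by
  have hβ0 : 0 < β := by linarith
  choose D hDn hD using exists_cuts hβ
  refine le_antisymm (le_of_forall_gt fun d hd => ?_) (zero_le)
  obtain ⟨e, he0, hed⟩ := ENNReal.lt_iff_exists_nnreal_btwn.1 hd
  refine lt_of_le_of_lt (dimH_le_of_hausdorffMeasure_ne_top (d := e) ?_) hed
  have he : (0 : ℝ) < e := by exact_mod_cast he0
  have hγ : 1 < β ^ (e : ℝ) := Real.one_lt_rpow hβ he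
  have hbase : Tendsto (fun n : ℕ => ENNReal.ofReal ((β ^ n)⁻¹)) atTop (𝓝 0) := by
    rw [← ENNReal.ofReal_zero]
    refine ENNReal.tendsto_ofReal ?_
    simpa [inv_pow] using tendsto_pow_atTop_nhds_zero_of_lt_one (r := β⁻¹) (by positivity)
      (inv_lt_one_of_one_lt₀ hβ)
  set S : (n : ℕ) → Fin (n + 1) → Set ℝ := fun n i =>
    {x | x ∈ survivor β (1 - 1 / β) ∧ ((D n).filter (· ≤ x)).card = i} with hS
  have hclose : ∀ n (i : Fin (n + 1)), ∀ x ∈ S n i, ∀ y ∈ S n i, x < y → y - x ≤ (β ^ n)⁻¹ := by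
    rintro n i x ⟨hx, hxi⟩ y ⟨hy, hyi⟩ hxy
    refine hD n x hx y hy hxy fun d hd hcut => ?_
    have hsub : (D n).filter (· ≤ x) ⊆ (D n).filter (· ≤ y) :=
      Finset.monotone_filter_right _ fun a _ (ha : a ≤ x) => ha.trans hxy.le
    have heq := Finset.eq_of_subset_of_card_le hsub (by rw [hxi, hyi])
    have hmem : d ∈ (D n).filter (· ≤ y) := Finset.mem_filter.2 ⟨hd, hcut.2⟩
    rw [← heq, Finset.mem_filter] at hmem
    exact absurd hmem.2 (not_le.2 hcut.1)
  have hdiam : ∀ n (i : Fin (n + 1)), Metric.ediam (S n i) ≤ ENNReal.ofReal ((β ^ n)⁻¹) := by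
    refine fun n i => Metric.ediam_le fun x hx y hy => ?_
    rw [edist_dist]
    refine ENNReal.ofReal_le_ofReal ?_
    rw [Real.dist_eq]
    rcases lt_trichotomy x y with h | h | h
    · rw [abs_sub_comm, abs_of_pos (by linarith)]
      exact hclose n i x hx y hy h
    · rw [h, sub_self, abs_zero]
      positivity
    · rw [abs_of_pos (by linarith)]
      exact hclose n i y hy x hx h
  have hlim : Tendsto (fun n : ℕ => ∑ i : Fin (n + 1), Metric.ediam (S n i) ^ (e : ℝ))
      atTop (𝓝 0) := by
    have hub : Tendsto (fun n : ℕ => ENNReal.ofReal (((n : ℝ) + 1) / (β ^ (e : ℝ)) ^ n))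
        atTop (𝓝 0) := by
      rw [← ENNReal.ofReal_zero]
      exact ENNReal.tendsto_ofReal (summable_succ_div_pow hγ).tendsto_atTop_zero
    refine tendsto_of_tendsto_of_tendsto_of_le_of_le tendsto_const_nhds hub
      (fun n => zero_le) fun n => ?_
    calc ∑ i : Fin (n + 1), Metric.ediam (S n i) ^ (e : ℝ)
        ≤ ∑ _i : Fin (n + 1), ENNReal.ofReal ((β ^ n)⁻¹) ^ (e : ℝ) :=
          Finset.sum_le_sum fun i _ => ENNReal.rpow_le_rpow (hdiam n i) he.le
      _ = ENNReal.ofReal (((n : ℝ) + 1) / (β ^ (e : ℝ)) ^ n) := by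
          rw [Finset.sum_const, Finset.card_univ, Fintype.card_fin, nsmul_eq_mul,
            ENNReal.ofReal_rpow_of_nonneg (by positivity) he.le, ← ENNReal.ofReal_natCast,
            ← ENNReal.ofReal_mul (by positivity), Real.inv_rpow (by positivity),
            ← Real.rpow_natCast, ← Real.rpow_natCast, ← Real.rpow_mul hβ0.le,
            ← Real.rpow_mul hβ0.le, mul_comm (n : ℝ) (e : ℝ), div_eq_mul_inv]
          push_cast
          rfl
  have hK := Measure.hausdorffMeasure_le_liminf_sum (e : ℝ) (survivor β (1 - 1 / β)) _ hbase S
    (Eventually.of_forall hdiam) (Eventually.of_forall fun n x hx => ?_)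
  · rw [hlim.liminf_eq] at hK
    exact ne_top_of_le_ne_top ENNReal.zero_ne_top hK
  · exact mem_iUnion.2 ⟨⟨((D n).filter (· ≤ x)).card,
      Nat.lt_succ_of_le ((Finset.card_filter_le _ _).trans (hDn n))⟩, hx, rfl⟩

lemma tau_le_of_dimH_eq_zero {β t : ℝ} (ht : 0 < t) (h : dimH (survivor β t) = 0) :
    tau β ≤ t :=
  csInf_le ⟨0, fun _ hs => hs.1.le⟩ ⟨ht, h⟩

/-! ### A jump at a rational slope makes the critical value small -/

lemma mul_abelSum_shift {β : ℝ} (hβ : 1 < β) {f : ℕ → ℝ} (hf : LinGrowth f) (a : ℕ) :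
    β * abelSum β (fun j => f (a + j) - f a)
      = (f (a + 1) - f a) + abelSum β (fun j => f (a + 1 + j) - f (a + 1)) := by
  rw [mul_abelSum hβ ((hf.shift a).sub_const _) (by simp)]
  congr 2
  ext j
  rw [← add_assoc]
  ring

lemma natCast_add_mul_div {k n : ℕ} (hn : 0 < n) (j : ℕ) :
    ((n + j : ℕ) : ℝ) * (k / n) = j * (k / n) + (k : ℤ) := by
  have : (n : ℝ) ≠ 0 := by positivity
  push_cast
  field_simp
  ring

lemma floor_lt_ceil_of_coprime {k n j : ℕ} (hkn : k.Coprime n) (hj : 0 < j) (hjn : j < n) :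
    ⌊(j : ℝ) * (k / n)⌋ + 1 ≤ ⌈(j : ℝ) * (k / n)⌉ := by
  have hn : (n : ℝ) ≠ 0 := by
    have : 0 < n := by omega
    positivity
  by_contra hcon
  have hle : ⌈(j : ℝ) * (k / n)⌉ ≤ ⌊(j : ℝ) * (k / n)⌋ := by omega
  have h1 : (⌈(j : ℝ) * (k / n)⌉ : ℝ) ≤ ⌊(j : ℝ) * (k / n)⌋ := by exact_mod_cast hle
  have h2 := Int.floor_le ((j : ℝ) * (k / n))
  have h3 := Int.le_ceil ((j : ℝ) * (k / n))
  obtain ⟨z, hz⟩ : ∃ z : ℤ, (j : ℝ) * (k / n) = z :=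
    ⟨⌊(j : ℝ) * (k / n)⌋, by linarith⟩
  have h5 : (j : ℝ) * k = n * z := by
    rw [← hz]
    field_simp
  have h6 : (n : ℤ) ∣ ((j * k : ℕ) : ℤ) := ⟨z, by exact_mod_cast h5⟩
  have h7 : n ∣ j := hkn.symm.dvd_of_dvd_mul_right (Int.natCast_dvd_natCast.1 h6)
  exact absurd (Nat.le_of_dvd hj h7) (by omega)

lemma lowVal_mul_lt {β : ℝ} (hβ : 1 < β) {k n : ℕ} (hn : 0 < n) (hkn : k.Coprime n)
    (hM : upVal β (k / n) < 1) : lowVal β (k / n) * (1 - 1 / β ^ n) < 1 - 1 / β := by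
  have hβ0 : 0 < β := by linarith
  have hpos : 0 < 1 - 1 / β ^ n := by
    rw [sub_pos, div_lt_one (by positivity)]
    exact one_lt_pow₀ hβ hn.ne'
  have h1 := abelSum_periodic hβ (linGrowth_floor (k / n)) (n := n) (k := k) fun j => by
    rw [natCast_add_mul_div hn, Int.floor_add_intCast]
    push_cast
    rfl
  have h2 := abelSum_periodic hβ (linGrowth_ceil (k / n)) (n := n) (k := k) fun j => by
    rw [natCast_add_mul_div hn, Int.ceil_add_intCast]
    push_cast
    rfl
  have h3 := abelSum_periodic hβ (linGrowth_const 1) (n := n) (k := 0) fun j => by simp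
  rw [abelSum_const hβ] at h3
  have hite : ∑ j ∈ Finset.range n, (if j = 0 then (1 : ℝ) else 0) = 1 := by
    simp [hn.ne']
  have hsum : ∑ j ∈ Finset.range n, (⌊(j : ℝ) * (k / n)⌋ : ℝ) / β ^ j
      + ∑ j ∈ Finset.range n, 1 / β ^ j - ∑ j ∈ Finset.range n, (if j = 0 then (1 : ℝ) else 0)
      ≤ ∑ j ∈ Finset.range n, (⌈(j : ℝ) * (k / n)⌉ : ℝ) / β ^ j := by
    rw [← Finset.sum_add_distrib, ← Finset.sum_sub_distrib]
    refine Finset.sum_le_sum fun j hj => ?_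
    rcases Nat.eq_zero_or_pos j with rfl | hj0
    · simp
    · have h := floor_lt_ceil_of_coprime hkn hj0 (Finset.mem_range.1 hj)
      have h' : (⌊(j : ℝ) * (k / n)⌋ : ℝ) + 1 ≤ ⌈(j : ℝ) * (k / n)⌉ := by exact_mod_cast h
      rw [if_neg hj0.ne', sub_zero, ← add_div]
      gcongr
  rw [hite] at hsum
  have hmul := mul_le_mul_of_nonneg_left hsum (one_sub_one_div_pos hβ).le
  rw [mul_sub, mul_add, mul_one] at hmul
  have hlt := mul_lt_mul_of_pos_right hM hpos
  rw [one_mul, zero_div, add_zero] at h3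
  rw [one_mul, upVal, h2, h3] at hlt
  rw [lowVal, h1]
  linarith

lemma exists_survivor_subset {β : ℝ} (hβ : 1 < β) {k n : ℕ} (hn : 0 < n) (hkn : k.Coprime n)
    (hM : upVal β (k / n) < 1) (hm : 1 ≤ lowVal β (k / n) + 1 / β) :
    ∃ t, 0 < t ∧ t < 1 - 1 / β ∧ survivor β t ⊆ survivor β (1 - 1 / β) := by
  have hβ0 : 0 < β := by linarith
  have hts := one_sub_one_div_pos hβ
  have hδ := lowVal_mul_lt hβ hn hkn hM
  set x : ℝ := k / n with hx
  have hx0 : 0 ≤ x := by positivity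
  set m := lowVal β x with hmdef
  set ts := 1 - 1 / β with htsdef
  have hmts : ts ≤ m := by rw [htsdef]; linarith
  set X : ℕ → ℝ := fun j => abelSum β fun i => (⌊((j + i : ℕ) : ℝ) * x⌋ : ℝ) - ⌊(j : ℝ) * x⌋
    with hX
  have hX0 : X 0 = m := by simp [hX, hmdef, lowVal]
  have hXn : X n = m := by
    simp only [hX, hmdef, lowVal]
    congr 1
    ext i
    have h0 := natCast_add_mul_div (k := k) hn 0
    rw [add_zero] at h0
    rw [hx, natCast_add_mul_div hn, Int.floor_add_intCast, h0]
    simp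
  have hXM : ∀ j, X j < 1 := fun j => by
    refine lt_of_le_of_lt (abelSum_mono hβ (((linGrowth_floor x).shift j).sub_const _)
      (linGrowth_ceil x) fun i => ?_) hM
    have h : ⌊((j + i : ℕ) : ℝ) * x⌋ ≤ ⌊(j : ℝ) * x⌋ + ⌈(i : ℝ) * x⌉ := by
      rw [← Int.floor_add_intCast]
      refine Int.floor_le_floor ?_
      push_cast
      linarith [Int.le_ceil ((i : ℝ) * x)]
    rw [sub_le_iff_le_add']
    exact_mod_cast h
  set s : ℕ → ℤ := fun j => ⌊((j + 1 : ℕ) : ℝ) * x⌋ - ⌊(j : ℝ) * x⌋ with hs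
  have hs0 : ∀ j, 0 ≤ s j := fun j => by
    refine sub_nonneg.2 (Int.floor_le_floor ?_)
    push_cast
    linarith
  have hstep : ∀ j, β * X j = s j + X (j + 1) := fun j => by
    have h := mul_abelSum_shift hβ (linGrowth_floor x) j
    simp only [hX, hs]
    rw [h]
    push_cast
    rfl
  have hXlow : ∀ i j, X (j + i) ≤ β ^ i * X j := fun i j => by
    induction i with
    | zero => simp
    | succ i ih =>
      have h1 := hstep (j + i)
      have h2 : (0 : ℝ) ≤ s (j + i) := by exact_mod_cast hs0 (j + i)
      have h3 := mul_le_mul_of_nonneg_left ih hβ0.le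
      rw [pow_succ', mul_assoc, ← add_assoc]
      linarith
  have horbit : ∀ z, m - m / β ^ n < z → z < ts → ∀ j ≤ n,
      (Tbeta β)^[j] z = X j - β ^ j * (m - z) := fun z hz hzt j => by
    induction j with
    | zero => simp [hX0]
    | succ j ih =>
      intro hj
      have hlow : β ^ (j + 1) * (m - z) ≤ X (j + 1) := by
        have h1 := hXlow (n - (j + 1)) (j + 1)
        rw [Nat.add_sub_cancel' hj, hXn] at h1
        have h2 : β ^ n * (m - z) ≤ m := by
          have h3 : m - z ≤ m / β ^ n := by linarith
          rwa [le_div_iff₀' (by positivity)] at h3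
        have h4 : β ^ n = β ^ (n - (j + 1)) * β ^ (j + 1) := by
          rw [← pow_add, Nat.sub_add_cancel hj]
        rw [h4, mul_assoc] at h2
        exact le_of_mul_le_mul_left (h2.trans h1) (by positivity)
      have hpos : 0 < β ^ (j + 1) * (m - z) := mul_pos (by positivity) (by linarith)
      rw [Function.iterate_succ_apply', ih (by omega), Tbeta, Int.fract_eq_iff]
      refine ⟨by linarith, by linarith [hXM (j + 1)], s j, ?_⟩
      rw [mul_sub, hstep]
      ring
  have hm0 : 0 < m := hts.trans_le hmts
  have hδ' : m - m / β ^ n < ts := by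
    convert hδ using 1
    ring
  refine ⟨max (ts / 2) ((m - m / β ^ n + ts) / 2), lt_max_of_lt_left (by linarith),
    max_lt (by linarith) (by linarith), fun y hy => ⟨hy.1, fun N => ?_⟩⟩
  set t := max (ts / 2) ((m - m / β ^ n + ts) / 2) with ht
  by_contra! hlt
  have hz := iterate_Tbeta_mem_survivor hy N
  set z := (Tbeta β)^[N] y with hzdef
  have ht1 : m - m / β ^ n < t := lt_of_lt_of_le (by linarith) (le_max_right _ _)
  have hiter : ∀ i, (Tbeta β)^[n * i] z = m - (β ^ n) ^ i * (m - z) := fun i => by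
    induction i with
    | zero => simp
    | succ i ih =>
      have hi := iterate_Tbeta_mem_survivor hz (n * i)
      have hle : (Tbeta β)^[n * i] z ≤ z := by
        rw [ih]
        have h1 : 1 ≤ (β ^ n) ^ i := one_le_pow₀ (one_le_pow₀ hβ.le)
        nlinarith
      have h := horbit _ (ht1.trans_le (le_of_mem_survivor hi)) (hle.trans_lt hlt) n le_rfl
      rw [← Function.iterate_add_apply, hXn, ih] at h
      rw [mul_add, mul_one, add_comm, h]
      ring
  obtain ⟨i, hi⟩ := pow_unbounded_of_one_lt (m / (m - z)) (one_lt_pow₀ hβ hn.ne')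
  rw [div_lt_iff₀ (by linarith)] at hi
  have h := (iterate_Tbeta_mem_survivor hz (n * i)).1.1
  rw [hiter] at h
  linarith

lemma tau_lt_of_jump {β : ℝ} (hβ : 1 < β) {k n : ℕ} (hn : 0 < n) (hkn : k.Coprime n)
    (hM : upVal β (k / n) < 1) (hm : 1 ≤ lowVal β (k / n) + 1 / β) : tau β < 1 - 1 / β := by
  obtain ⟨t, ht0, ht, hsub⟩ := exists_survivor_subset hβ hn hkn hM hm
  refine (tau_le_of_dimH_eq_zero ht0 ?_).trans_lt ht
  exact le_antisymm ((dimH_mono hsub).trans (dimH_survivor_one_sub_inv hβ).le) zero_le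

/-! ### Positive dimension below `1 - 1/β` when some upper mechanical value is `1` -/

/-- The path which in the `i`-th block of length `H` moves with slope `x₁` or `x₂` according to
the `i`-th digit of `ω`. -/
def slopePath (x₁ x₂ : ℝ) (H : ℕ) (ω : ℕ → Fin 2) (a : ℕ) : ℝ :=
  ∑ b ∈ Finset.range a, if ω (b / H) = 0 then x₁ else x₂

/-- The value in base `β` of the tail from `a` of the digit sequence whose partial sums are the
integer parts of a slope path. -/
noncomputable def pathVal (β x₁ x₂ : ℝ) (H : ℕ) (ω : ℕ → Fin 2) (a : ℕ) : ℝ :=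
  abelSum β fun j => (⌊slopePath x₁ x₂ H ω (a + j)⌋ : ℝ) - ⌊slopePath x₁ x₂ H ω a⌋

section SlopePath

variable {β x₁ x₂ t : ℝ} {H : ℕ}

lemma slopePath_bounds (hx : x₁ < x₂) (ω : ℕ → Fin 2) (a j : ℕ) :
    slopePath x₁ x₂ H ω a + j * x₁ ≤ slopePath x₁ x₂ H ω (a + j) ∧
      slopePath x₁ x₂ H ω (a + j) ≤ slopePath x₁ x₂ H ω a + j * x₂ := by
  induction j with
  | zero => simp
  | succ j ih =>
    have h : slopePath x₁ x₂ H ω (a + (j + 1)) = slopePath x₁ x₂ H ω (a + j)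
        + if ω ((a + j) / H) = 0 then x₁ else x₂ := by
      rw [← add_assoc, slopePath, Finset.sum_range_succ, slopePath]
    rw [h]
    push_cast
    constructor <;> split_ifs <;> linarith

lemma slopePath_zero (ω : ℕ → Fin 2) : slopePath x₁ x₂ H ω 0 = 0 := by
  simp [slopePath]

lemma linGrowth_slopePath (hx : x₁ < x₂) (ω : ℕ → Fin 2) :
    LinGrowth fun j => (⌊slopePath x₁ x₂ H ω j⌋ : ℝ) := by
  refine ⟨|x₁| + |x₂| + 1, fun j => ?_⟩
  have hj : (0 : ℝ) ≤ j := Nat.cast_nonneg j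
  obtain ⟨h1, h2⟩ := slopePath_bounds (H := H) hx ω 0 j
  rw [slopePath_zero, zero_add, zero_add] at h1 h2
  have h3 := Int.floor_le (slopePath x₁ x₂ H ω j)
  have h4 := Int.lt_floor_add_one (slopePath x₁ x₂ H ω j)
  have h5 := mul_le_mul_of_nonneg_left (neg_abs_le x₁) hj
  have h6 := mul_le_mul_of_nonneg_left (le_abs_self x₂) hj
  have h7 := mul_nonneg hj (abs_nonneg x₁)
  have h8 := mul_nonneg hj (abs_nonneg x₂)
  rw [abs_le]
  constructor <;> nlinarith [abs_nonneg x₁, abs_nonneg x₂]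

lemma lowVal_le_pathVal (hβ : 1 < β) (hx : x₁ < x₂) (ω : ℕ → Fin 2) (a : ℕ) :
    lowVal β x₁ ≤ pathVal β x₁ x₂ H ω a := by
  refine abelSum_mono hβ (linGrowth_floor x₁) (((linGrowth_slopePath hx ω).shift a).sub_const _)
    fun j => ?_
  have h : ⌊slopePath x₁ x₂ H ω a⌋ + ⌊(j : ℝ) * x₁⌋ ≤ ⌊slopePath x₁ x₂ H ω (a + j)⌋ :=
    (Int.le_floor_add _ _).trans (Int.floor_le_floor (slopePath_bounds hx ω a j).1)
  rw [le_sub_iff_add_le']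
  exact_mod_cast h

lemma pathVal_le_upVal (hβ : 1 < β) (hx : x₁ < x₂) (ω : ℕ → Fin 2) (a : ℕ) :
    pathVal β x₁ x₂ H ω a ≤ upVal β x₂ := by
  refine abelSum_mono hβ (((linGrowth_slopePath hx ω).shift a).sub_const _) (linGrowth_ceil x₂)
    fun j => ?_
  have h : ⌊slopePath x₁ x₂ H ω (a + j)⌋ ≤ ⌊slopePath x₁ x₂ H ω a⌋ + ⌈(j : ℝ) * x₂⌉ := by
    rw [← Int.floor_add_intCast]
    refine Int.floor_le_floor ((slopePath_bounds hx ω a j).2.trans ?_)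
    gcongr
    exact Int.le_ceil _
  rw [sub_le_iff_le_add']
  exact_mod_cast h

lemma mul_pathVal (hβ : 1 < β) (hx : x₁ < x₂) (ω : ℕ → Fin 2) (a : ℕ) :
    β * pathVal β x₁ x₂ H ω a
      = ((⌊slopePath x₁ x₂ H ω (a + 1)⌋ : ℝ) - ⌊slopePath x₁ x₂ H ω a⌋)
        + pathVal β x₁ x₂ H ω (a + 1) :=
  mul_abelSum_shift hβ (linGrowth_slopePath hx ω) a

lemma pathVal_mem_survivor (hβ : 1 < β) (hx : x₁ < x₂) (ht0 : 0 < t) (ht : t ≤ lowVal β x₁)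
    (hM : upVal β x₂ < 1) (ω : ℕ → Fin 2) : pathVal β x₁ x₂ H ω 0 ∈ survivor β t := by
  have hlow := fun a => ht.trans (lowVal_le_pathVal (H := H) hβ hx ω a)
  have hup := fun a => (pathVal_le_upVal (H := H) hβ hx ω a).trans_lt hM
  refine ⟨⟨ht0.le.trans (hlow 0), hup 0⟩, fun n => ?_⟩
  have horbit : (Tbeta β)^[n] (pathVal β x₁ x₂ H ω 0) = pathVal β x₁ x₂ H ω n := by
    induction n with
    | zero => rfl
    | succ n ih =>
      rw [Function.iterate_succ_apply', ih, Tbeta, Int.fract_eq_iff]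
      refine ⟨ht0.le.trans (hlow _), hup _,
        ⌊slopePath x₁ x₂ H ω (n + 1)⌋ - ⌊slopePath x₁ x₂ H ω n⌋, ?_⟩
      rw [mul_pathVal hβ hx]
      push_cast
      ring
  rw [horbit]
  exact hlow n

lemma slopePath_block (hH : 0 < H) (ω : ℕ → Fin 2) (i : ℕ) :
    slopePath x₁ x₂ H ω (H * i + H)
      = slopePath x₁ x₂ H ω (H * i) + H * if ω i = 0 then x₁ else x₂ := by
  rw [slopePath, Finset.sum_range_add, ← slopePath]
  congr 1
  rw [← nsmul_eq_mul, ← Finset.card_range H, ← Finset.sum_const, Finset.card_range]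
  refine Finset.sum_congr rfl fun c hc => ?_
  rw [Nat.mul_add_div hH, Nat.div_eq_of_lt (Finset.mem_range.1 hc), add_zero]

lemma slopePath_congr {ω ω' : ℕ → Fin 2} {i : ℕ} (h : ∀ j < i, ω j = ω' j) :
    slopePath x₁ x₂ H ω (H * i) = slopePath x₁ x₂ H ω' (H * i) := by
  refine Finset.sum_congr rfl fun b hb => ?_
  rw [h _ (Nat.div_lt_of_lt_mul (Finset.mem_range.1 hb))]

lemma floor_slopePath_ne (hH0 : 0 < H) (hH : 1 ≤ H * (x₂ - x₁)) {ω ω' : ℕ → Fin 2}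
    {i : ℕ} (h : ∀ j < i, ω j = ω' j) (hi : ω i ≠ ω' i) :
    ⌊slopePath x₁ x₂ H ω (H * i + H)⌋ ≠ ⌊slopePath x₁ x₂ H ω' (H * i + H)⌋ := by
  intro heq
  have habs := Int.abs_sub_lt_one_of_floor_eq_floor heq
  rw [slopePath_block hH0, slopePath_block hH0, slopePath_congr h, add_sub_add_left_eq_sub,
    abs_lt] at habs
  split_ifs at habs with h1 h2 h2
  · exact hi (h1.trans h2.symm)
  · linarith
  · linarith
  · exact hi (by omega)

lemma le_abs_pathVal_sub (hβ : 1 < β) (hx : x₁ < x₂) (ht : t ≤ lowVal β x₁)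
    (hM : upVal β x₂ < 1) (hH0 : 0 < H) (hH : 1 ≤ H * (x₂ - x₁)) {ω ω' : ℕ → Fin 2}
    {i : ℕ} (h : ∀ j < i, ω j = ω' j) (hi : ω i ≠ ω' i) :
    t / β ^ (H * i + H) ≤ |pathVal β x₁ x₂ H ω 0 - pathVal β x₁ x₂ H ω' 0| := by
  classical
  have hne := floor_slopePath_ne hH0 hH h hi
  have hex : ∃ b, ⌊slopePath x₁ x₂ H ω b⌋ ≠ ⌊slopePath x₁ x₂ H ω' b⌋ := ⟨_, hne⟩
  have hb := Nat.find_spec hex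
  have hmin : ∀ a < Nat.find hex, ⌊slopePath x₁ x₂ H ω a⌋ = ⌊slopePath x₁ x₂ H ω' a⌋ :=
    fun a ha => not_not.1 (Nat.find_min hex ha)
  have hble : Nat.find hex ≤ H * i + H := Nat.find_min' hex hne
  set b := Nat.find hex
  have hdiff : ∀ a ≤ b, β ^ a * (pathVal β x₁ x₂ H ω 0 - pathVal β x₁ x₂ H ω' 0)
      = ((⌊slopePath x₁ x₂ H ω a⌋ : ℝ) - ⌊slopePath x₁ x₂ H ω' a⌋)
        + (pathVal β x₁ x₂ H ω a - pathVal β x₁ x₂ H ω' a) := fun a => by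
    induction a with
    | zero => simp [slopePath_zero]
    | succ a ih =>
      intro ha
      have h1 := mul_pathVal (H := H) hβ hx ω a
      have h2 := mul_pathVal (H := H) hβ hx ω' a
      rw [pow_succ', mul_assoc, ih (by omega), hmin a (by omega), sub_self, zero_add, mul_sub,
        h1, h2, hmin a (by omega)]
      ring
  have h1 := hdiff b le_rfl
  have h2 : (1 : ℝ) ≤ |(⌊slopePath x₁ x₂ H ω b⌋ : ℝ) - ⌊slopePath x₁ x₂ H ω' b⌋| := by
    exact_mod_cast Int.one_le_abs (sub_ne_zero.2 hb)
  have h3 : |pathVal β x₁ x₂ H ω b - pathVal β x₁ x₂ H ω' b| ≤ 1 - t := by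
    have := lowVal_le_pathVal (H := H) hβ hx ω b
    have := lowVal_le_pathVal (H := H) hβ hx ω' b
    have := pathVal_le_upVal (H := H) hβ hx ω b
    have := pathVal_le_upVal (H := H) hβ hx ω' b
    rw [abs_le]
    constructor <;> linarith
  have h4 : t ≤ β ^ b * |pathVal β x₁ x₂ H ω 0 - pathVal β x₁ x₂ H ω' 0| := by
    rw [← abs_of_pos (show 0 < β ^ b by positivity), ← abs_mul, h1]
    have := abs_sub_abs_le_abs_add ((⌊slopePath x₁ x₂ H ω b⌋ : ℝ) - ⌊slopePath x₁ x₂ H ω' b⌋)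
      (pathVal β x₁ x₂ H ω b - pathVal β x₁ x₂ H ω' b)
    linarith
  rw [div_le_iff₀' (by positivity)]
  refine h4.trans ?_
  gcongr
  exact hβ.le

end SlopePath

lemma dimH_survivor_pos {β a t : ℝ} (hβ : 1 < β) (ha : upVal β a = 1) (ht0 : 0 < t)
    (ht : t < 1 - 1 / β) : dimH (survivor β t) ≠ 0 := by
  obtain ⟨x₁, x₂, hx, hlow, hM⟩ := exists_slopes hβ ha ht
  obtain ⟨H, hH⟩ := exists_nat_ge (1 / (x₂ - x₁))
  rw [div_le_iff₀ (by linarith)] at hH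
  have hH0 : 0 < H := by
    rcases Nat.eq_zero_or_pos H with rfl | h
    · norm_num at hH
    · exact h
  set g : (ℕ → Fin 2) → ℝ := fun ω => pathVal β x₁ x₂ H ω 0 with hg
  have hsep : ∀ ω ω', ω ≠ ω' → ∃ i, (∀ j < i, ω j = ω' j) ∧ t / β ^ (H * i + H) ≤ |g ω - g ω'| := by
    intro ω ω' hne
    classical
    have hex : ∃ i, ω i ≠ ω' i := Function.ne_iff.1 hne
    have hmin : ∀ j < Nat.find hex, ω j = ω' j := fun j hj => not_not.1 (Nat.find_min hex hj)
    exact ⟨Nat.find hex, hmin, le_abs_pathVal_sub hβ hx hlow hM hH0 hH hmin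
      (Nat.find_spec hex)⟩
  have hinj : Function.Injective g := by
    intro ω ω' heq
    by_contra hne
    obtain ⟨i, -, hi⟩ := hsep ω ω' hne
    rw [heq, sub_self, abs_zero] at hi
    exact absurd hi (not_le.2 (by positivity))
  have hlogβ : 0 < Real.log β := Real.log_pos hβ
  have hlog2 : 0 < Real.log 2 := Real.log_pos (by norm_num)
  set r : ℝ := Real.log 2 / (H * Real.log β) with hr
  have hr0 : 0 < r := by positivity
  have hβr : ∀ j : ℕ, (β ^ (H * j)) ^ r = 2 ^ j := fun j => by
    have hβ0 : 0 < β := by linarith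
    rw [← Real.rpow_natCast, ← Real.rpow_mul hβ0.le, ← Real.rpow_natCast,
      Real.rpow_def_of_pos hβ0, Real.rpow_def_of_pos (by norm_num), hr]
    congr 1
    push_cast
    field_simp
  have hholder : HolderOnWith (Real.toNNReal (2 / t ^ r)) (Real.toNNReal r)
      (fun x => Real.ofDigits (Function.invFun g x)) (range g) := by
    rintro _ ⟨ω, rfl⟩ _ ⟨ω', rfl⟩
    simp only [Function.leftInverse_invFun hinj _]
    rw [edist_dist, edist_dist, Real.coe_toNNReal _ hr0.le,
      ENNReal.ofReal_rpow_of_nonneg dist_nonneg hr0.le]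
    change _ ≤ ENNReal.ofReal (2 / t ^ r) * _
    rw [← ENNReal.ofReal_mul (by positivity), Real.dist_eq, Real.dist_eq]
    refine ENNReal.ofReal_le_ofReal ?_
    by_cases hne : ω = ω'
    · rw [hne, sub_self, abs_zero]
      positivity
    obtain ⟨i, hi, hdist⟩ := hsep ω ω' hne
    refine (Real.abs_ofDigits_sub_ofDigits_le hi).trans ?_
    have h1 := Real.rpow_le_rpow (by positivity) hdist hr0.le
    rw [Real.div_rpow ht0.le (by positivity), ← Nat.mul_succ, hβr] at h1
    calc (((2 : ℕ) : ℝ) ^ i)⁻¹ = 2 / t ^ r * (t ^ r / 2 ^ (i + 1)) := by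
          have : t ^ r ≠ 0 := by positivity
          push_cast
          field_simp
          ring
      _ ≤ 2 / t ^ r * |g ω - g ω'| ^ r := by gcongr
  have himage : Icc (0 : ℝ) 1 ⊆ (fun x => Real.ofDigits (Function.invFun g x)) '' range g := by
    intro y hy
    obtain ⟨ω, -, rfl⟩ := Real.ofDigits_SurjOn (b := 2) (by norm_num) hy
    exact ⟨g ω, ⟨ω, rfl⟩, by simp only [Function.leftInverse_invFun hinj _]⟩
  have hsub : range g ⊆ survivor β t := by
    rintro _ ⟨ω, rfl⟩
    exact pathVal_mem_survivor hβ hx ht0 hlow hM ω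
  intro hzero
  have h1 : dimH (Icc (0 : ℝ) 1) = 1 := by
    rw [Real.dimH_of_nonempty_interior (by simp)]
    simp
  have h2 := (dimH_mono himage).trans (hholder.dimH_image_le (by simpa using hr0))
  have h3 : dimH (range g) = 0 := le_antisymm ((dimH_mono hsub).trans hzero.le) zero_le
  rw [h1, h3, ENNReal.zero_div] at h2
  exact absurd h2 (by norm_num)

lemma tau_eq_of_upVal_eq_one {β a : ℝ} (hβ : 1 < β) (ha : upVal β a = 1) :
    tau β = 1 - 1 / β := by
  have hmem := dimH_survivor_one_sub_inv hβ
  have hts := one_sub_one_div_pos hβ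
  refine le_antisymm (tau_le_of_dimH_eq_zero hts hmem) (le_csInf ⟨_, hts, hmem⟩ ?_)
  rintro t ⟨ht0, ht⟩
  by_contra! hlt
  exact dimH_survivor_pos hβ ha ht0 hlt ht

/-! ### Farey words are lower mechanical words -/

/-- The digits of the lower mechanical word of slope `k/n`. -/
def lowDigit (k n j : ℕ) : ℕ := (j + 1) * k / n - j * k / n

/-- The digits of the upper mechanical word of slope `k/n`. -/
def upDigit (k n j : ℕ) : ℕ := ((j + 1) * k + n - 1) / n - (j * k + n - 1) / n

/-- The lower mechanical word of slope `k/n`. -/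
def mech (k n : ℕ) : List ℕ := (List.range n).map (lowDigit k n)

/-- The upper mechanical word of slope `k/n`. -/
def mechUp (k n : ℕ) : List ℕ := (List.range n).map (upDigit k n)

@[simp] lemma length_mech (k n : ℕ) : (mech k n).length = n := by simp [mech]

@[simp] lemma length_mechUp (k n : ℕ) : (mechUp k n).length = n := by simp [mechUp]

lemma mul_div_mono (k n : ℕ) {i j : ℕ} (h : i ≤ j) : i * k / n ≤ j * k / n :=
  Nat.div_le_div_right (Nat.mul_le_mul_right k h)

lemma mediant_div_left {k₁ n₁ k₂ n₂ j : ℕ} (hn₁ : 0 < n₁) (hn₂ : 0 < n₂)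
    (h : k₂ * n₁ = k₁ * n₂ + 1) (hj : j ≤ n₁) :
    j * (k₁ + k₂) / (n₁ + n₂) = j * k₁ / n₁ := by
  have h1 := Nat.div_mul_le_self (j * k₁) n₁
  have h2 : j * k₁ + 1 ≤ (j * k₁ / n₁ + 1) * n₁ := Nat.lt_mul_of_div_lt (Nat.lt_succ_self _) hn₁
  generalize j * k₁ / n₁ = q at h1 h2
  have hmul : n₁ * (j * (k₁ + k₂)) = (n₁ + n₂) * (j * k₁) + j := by
    calc n₁ * (j * (k₁ + k₂)) = j * k₁ * n₁ + j * (k₂ * n₁) := by ring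
      _ = (n₁ + n₂) * (j * k₁) + j := by rw [h]; ring
  refine Nat.div_eq_of_lt_le (Nat.le_of_mul_le_mul_left ?_ hn₁)
    (Nat.lt_of_mul_lt_mul_left (a := n₁) ?_)
  · have := Nat.mul_le_mul_left (n₁ + n₂) h1
    rw [hmul]
    linarith
  · have := Nat.mul_le_mul_left (n₁ + n₂) h2
    rw [hmul]
    linarith

lemma mediant_div_right {k₁ n₁ k₂ n₂ i : ℕ} (hn₁ : 0 < n₁) (hn₂ : 0 < n₂)
    (h : k₂ * n₁ = k₁ * n₂ + 1) (hi : i ≤ n₂) :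
    (n₁ + i) * (k₁ + k₂) / (n₁ + n₂) = k₁ + i * k₂ / n₂ := by
  have h1 := Nat.div_mul_le_self (i * k₂) n₂
  have h2 : i * k₂ + 1 ≤ (i * k₂ / n₂ + 1) * n₂ := Nat.lt_mul_of_div_lt (Nat.lt_succ_self _) hn₂
  generalize i * k₂ / n₂ = q at h1 h2
  have hmul : n₂ * ((n₁ + i) * (k₁ + k₂)) + i
      = (n₁ + n₂) * (i * k₂) + n₂ + k₁ * n₂ * (n₁ + n₂) := by
    calc n₂ * ((n₁ + i) * (k₁ + k₂)) + i
        = n₂ * n₁ * k₁ + n₂ * (k₂ * n₁) + i * k₂ * n₂ + i * (k₁ * n₂ + 1) := by ring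
      _ = n₂ * n₁ * k₁ + n₂ * (k₁ * n₂ + 1) + i * k₂ * n₂ + i * (k₂ * n₁) := by rw [h]
      _ = (n₁ + n₂) * (i * k₂) + n₂ + k₁ * n₂ * (n₁ + n₂) := by ring
  refine Nat.div_eq_of_lt_le (Nat.le_of_mul_le_mul_left ?_ hn₂)
    (Nat.lt_of_mul_lt_mul_left (a := n₂) ?_)
  · have := Nat.mul_le_mul_left (n₁ + n₂) h1
    linarith
  · have := Nat.mul_le_mul_left (n₁ + n₂) h2
    linarith

lemma mech_append {k₁ n₁ k₂ n₂ : ℕ} (hn₁ : 0 < n₁) (hn₂ : 0 < n₂)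
    (h : k₂ * n₁ = k₁ * n₂ + 1) : mech k₁ n₁ ++ mech k₂ n₂ = mech (k₁ + k₂) (n₁ + n₂) := by
  rw [mech, mech, mech, List.range_add, List.map_append, List.map_map]
  congr 1
  · refine List.map_congr_left fun j hj => ?_
    have hj' := List.mem_range.1 hj
    rw [lowDigit, lowDigit, mediant_div_left hn₁ hn₂ h hj'.le,
      mediant_div_left hn₁ hn₂ h (Nat.succ_le_of_lt hj')]
  · refine List.map_congr_left fun i hi => ?_
    have hi' := List.mem_range.1 hi
    rw [Function.comp_apply, lowDigit, lowDigit, mediant_div_right hn₁ hn₂ h hi'.le, add_assoc,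
      mediant_div_right hn₁ hn₂ h (Nat.succ_le_of_lt hi'), Nat.add_sub_add_left]

lemma theta_mech {k n : ℕ} (hn : 0 < n) : theta (mech k n) = mech (k + n) n := by
  rw [theta, mech, mech, List.map_map]
  refine List.map_congr_left fun j _ => ?_
  have : j * k / n ≤ (j + 1) * k / n := mul_div_mono k n (Nat.le_succ j)
  rw [Function.comp_apply, lowDigit, lowDigit, mul_add, mul_add, Nat.add_mul_div_right _ _ hn,
    Nat.add_mul_div_right _ _ hn]
  omega

lemma theta_iterate_mech {k n : ℕ} (hn : 0 < n) (c : ℕ) :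
    theta^[c] (mech k n) = mech (k + n * c) n := by
  induction c with
  | zero => simp
  | succ c ih => rw [Function.iterate_succ_apply', ih, theta_mech hn, mul_add, mul_one, add_assoc]

/-- Two fractions (numerator first) are Farey neighbours. -/
def FareyAdj (p q : ℕ × ℕ) : Prop := 0 < p.2 ∧ 0 < q.2 ∧ q.1 * p.2 = p.1 * q.2 + 1

/-- One step of the Farey recursion on fractions. -/
def fracInsert : List (ℕ × ℕ) → List (ℕ × ℕ)
  | [] => []
  | [p] => [p]
  | p :: q :: rest => p :: (p + q) :: fracInsert (q :: rest)

/-- The Farey fractions of a given level. -/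
def fracLevel : ℕ → List (ℕ × ℕ)
  | 0 => [(0, 1), (1, 1)]
  | N + 1 => fracInsert (fracLevel N)

lemma FareyAdj.left {p q : ℕ × ℕ} (h : FareyAdj p q) : FareyAdj p (p + q) := by
  obtain ⟨h1, h2, h3⟩ := h
  refine ⟨h1, by simp; omega, ?_⟩
  simp only [Prod.fst_add, Prod.snd_add]
  rw [add_mul, mul_add, h3]
  ring

lemma FareyAdj.right {p q : ℕ × ℕ} (h : FareyAdj p q) : FareyAdj (p + q) q := by
  obtain ⟨h1, h2, h3⟩ := h
  refine ⟨by simp; omega, h2, ?_⟩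
  simp only [Prod.fst_add, Prod.snd_add]
  rw [add_mul, mul_add, h3]
  ring

lemma FareyAdj.coprime {p q : ℕ × ℕ} (h : FareyAdj p q) :
    p.1.Coprime p.2 ∧ q.1.Coprime q.2 := by
  have h3 := h.2.2
  constructor
  · refine Nat.Coprime.symm (Nat.coprime_of_dvd' fun d _ hd1 hd2 => ?_)
    rw [← Nat.dvd_add_right (hd2.mul_right q.2), ← h3]
    exact hd1.mul_left q.1
  · refine Nat.coprime_of_dvd' fun d _ hd1 hd2 => ?_
    rw [← Nat.dvd_add_right (hd2.mul_left p.1), ← h3]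
    exact hd1.mul_right p.2

lemma fracInsert_cons (p : ℕ × ℕ) (l : List (ℕ × ℕ)) :
    ∃ l', fracInsert (p :: l) = p :: l' := by
  cases l with
  | nil => exact ⟨[], rfl⟩
  | cons q r => exact ⟨_, rfl⟩

lemma isChain_fracInsert : ∀ l : List (ℕ × ℕ), l.IsChain FareyAdj → (fracInsert l).IsChain FareyAdj
  | [], _ => by simp [fracInsert]
  | [p], _ => by simp [fracInsert]
  | p :: q :: rest, h => by
    rw [List.isChain_cons_cons] at h
    have ih := isChain_fracInsert (q :: rest) h.2
    obtain ⟨l', hl'⟩ := fracInsert_cons q rest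
    rw [fracInsert, hl', List.isChain_cons_cons, List.isChain_cons_cons]
    rw [hl'] at ih
    exact ⟨h.1.left, h.1.right, ih⟩

lemma isChain_fracLevel (N : ℕ) : (fracLevel N).IsChain FareyAdj := by
  induction N with
  | zero => simp [fracLevel, FareyAdj]
  | succ N ih => exact isChain_fracInsert _ ih

lemma fareyInsert_map : ∀ l : List (ℕ × ℕ), l.IsChain FareyAdj →
    fareyInsert (l.map fun p => mech p.1 p.2) = (fracInsert l).map fun p => mech p.1 p.2
  | [], _ => rfl
  | [p], _ => rfl
  | p :: q :: rest, h => by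
    rw [List.isChain_cons_cons] at h
    have ih := fareyInsert_map (q :: rest) h.2
    rw [List.map_cons] at ih
    rw [List.map_cons, List.map_cons, fareyInsert, ih, fracInsert, List.map_cons, List.map_cons,
      mech_append h.1.1 h.1.2.1 h.1.2.2]
    rfl

lemma fareyLevel_eq (N : ℕ) : fareyLevel N = (fracLevel N).map fun p => mech p.1 p.2 := by
  induction N with
  | zero => rfl
  | succ N ih => rw [fareyLevel, ih, fareyInsert_map _ (isChain_fracLevel N), fracLevel]

lemma coprime_fracInsert : ∀ l : List (ℕ × ℕ), l.IsChain FareyAdj →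
    (∀ p ∈ l, 0 < p.2 ∧ p.1.Coprime p.2) → ∀ p ∈ fracInsert l, 0 < p.2 ∧ p.1.Coprime p.2
  | [], _, h => h
  | [_], _, h => h
  | p :: q :: rest, hl, h => by
    rw [List.isChain_cons_cons] at hl
    have ih := coprime_fracInsert (q :: rest) hl.2 fun r hr => h r (List.mem_cons_of_mem _ hr)
    rw [fracInsert, List.forall_mem_cons, List.forall_mem_cons]
    exact ⟨h p List.mem_cons_self, ⟨hl.1.right.1, hl.1.left.coprime.2⟩, ih⟩

lemma coprime_fracLevel (N : ℕ) : ∀ p ∈ fracLevel N, 0 < p.2 ∧ p.1.Coprime p.2 := by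
  induction N with
  | zero => simp [fracLevel]
  | succ N ih => exact coprime_fracInsert _ (isChain_fracLevel N) ih

lemma infix_fracInsert {p q : ℕ × ℕ} : ∀ l : List (ℕ × ℕ), [p, q] <:+: l →
    [p, p + q] <:+: fracInsert l ∧ [p + q, q] <:+: fracInsert l
  | [], h => by simp at h
  | [r], h => by
    have := h.length_le
    simp at this
  | u :: v :: rest, h => by
    rw [List.infix_cons_iff] at h
    rcases h with h | h
    · rw [List.cons_prefix_cons, List.cons_prefix_cons] at h
      obtain ⟨rfl, rfl, -⟩ := h
      obtain ⟨l', hl'⟩ := fracInsert_cons q rest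
      rw [fracInsert, hl']
      exact ⟨⟨[], q :: l', by simp⟩, ⟨[p], l', by simp⟩⟩
    · obtain ⟨h1, h2⟩ := infix_fracInsert (v :: rest) h
      rw [fracInsert]
      exact ⟨List.infix_cons (List.infix_cons h1), List.infix_cons (List.infix_cons h2)⟩

lemma exists_infix_fracLevel {k₁ n₁ k₂ n₂ : ℕ} (hn₁ : 0 < n₁) (hn₂ : 0 < n₂)
    (h : k₂ * n₁ = k₁ * n₂ + 1) (hk : k₂ ≤ n₂) : ∃ N, [(k₁, n₁), (k₂, n₂)] <:+: fracLevel N := by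
  induction hs : n₁ + n₂ using Nat.strong_induction_on generalizing k₁ n₁ k₂ n₂ with
  | _ s ih =>
  subst hs
  rcases lt_trichotomy n₁ n₂ with hlt | heq | hgt
  · obtain ⟨n, rfl⟩ := Nat.exists_eq_add_of_lt hlt
    have hk12 : k₁ ≤ k₂ := by
      by_contra! hcon
      nlinarith
    obtain ⟨k, rfl⟩ := Nat.exists_eq_add_of_le hk12
    have hdet : k * n₁ = k₁ * (n + 1) + 1 := by nlinarith
    have hk1 : k₁ < n₁ := by
      by_contra! hcon
      nlinarith
    have hkn : k ≤ n + 1 := by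
      by_contra! hcon
      nlinarith
    obtain ⟨N, hN⟩ := ih (n₁ + (n + 1)) (by omega) hn₁ (by omega) hdet hkn rfl
    exact ⟨N + 1, (infix_fracInsert _ hN).1⟩
  · subst heq
    have h1 : n₁ ∣ 1 := by
      rw [← Nat.dvd_add_right (Dvd.intro_left k₁ rfl), ← h]
      exact Dvd.intro_left k₂ rfl
    obtain rfl := Nat.dvd_one.1 h1
    obtain rfl : k₁ = 0 := by omega
    obtain rfl : k₂ = 1 := by omega
    exact ⟨0, List.infix_refl _⟩
  · obtain ⟨n, rfl⟩ := Nat.exists_eq_add_of_lt hgt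
    have hk21 : k₂ ≤ k₁ := by
      by_contra! hcon
      nlinarith
    obtain ⟨k, rfl⟩ := Nat.exists_eq_add_of_le hk21
    have hdet : k₂ * (n + 1) = k * n₂ + 1 := by nlinarith
    obtain ⟨N, hN⟩ := ih (n + 1 + n₂) (by omega) (by omega) hn₂ hdet hk rfl
    have h2 := (infix_fracInsert _ hN).2
    rw [Prod.mk_add_mk, add_comm k, add_comm (n + 1)] at h2
    exact ⟨N + 1, h2⟩

lemma mech_mem_fareyLevel {k n : ℕ} (hn : 1 < n) (hkn : k.Coprime n) (hk : k ≤ n) :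
    ∃ N, mech k n ∈ fareyLevel N := by
  obtain ⟨a, ha, hmod⟩ := Nat.exists_mul_mod_eq_one_of_coprime hkn hn
  have hdiv := Nat.div_add_mod (k * a) n
  rw [hmod] at hdiv
  have ha0 : 0 < a := by
    rcases Nat.eq_zero_or_pos a with rfl | h
    · simp at hmod
    · exact h
  obtain ⟨N, hN⟩ := exists_infix_fracLevel (k₁ := k * a / n) ha0 (by omega : 0 < n)
    (by rw [mul_comm (k * a / n) n, hdiv]) hk
  refine ⟨N, ?_⟩
  rw [fareyLevel_eq]
  exact List.mem_map.2 ⟨(k, n), hN.subset (by simp), rfl⟩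

lemma mech_mem_fareyExt {k n : ℕ} (hk : 0 < k) (hn : 0 < n) (hkn : k.Coprime n) :
    mech k n ∈ FareyExt := by
  rcases Nat.lt_or_ge 1 n with h1 | h1
  · have hr : (k % n).Coprime n := by
      rw [Nat.Coprime, ← Nat.gcd_rec, Nat.gcd_comm]
      exact hkn
    refine ⟨mech (k % n) n, Or.inl ⟨mech_mem_fareyLevel h1 hr (Nat.mod_lt _ hn).le, ?_, ?_⟩,
      k / n, ?_⟩
    · intro h
      have := congrArg List.length h
      simp at this
      omega
    · intro h
      have := congrArg List.length h
      simp at this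
      omega
    · rw [theta_iterate_mech hn, Nat.mod_add_div]
  · obtain rfl : n = 1 := by omega
    refine ⟨mech 1 1, Or.inr rfl, k - 1, ?_⟩
    rw [theta_iterate_mech hn]
    congr 1
    omega

lemma exists_mech_of_mem_fareyExt {s : List ℕ} (hs : s ∈ FareyExt) :
    ∃ k n : ℕ, 0 < k ∧ 0 < n ∧ k.Coprime n ∧ s = mech k n := by
  obtain ⟨v, hv, c, rfl⟩ := hs
  obtain ⟨k, n, hk, hn, hkn, rfl⟩ : ∃ k n : ℕ, 0 < k ∧ 0 < n ∧ k.Coprime n ∧ v = mech k n := by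
    rcases hv with ⟨⟨N, hN⟩, h0, -⟩ | hv
    · rw [fareyLevel_eq] at hN
      obtain ⟨⟨k, n⟩, hp, rfl⟩ := List.mem_map.1 hN
      obtain ⟨hn, hkn⟩ := coprime_fracLevel N _ hp
      refine ⟨k, n, Nat.pos_of_ne_zero fun hk => h0 ?_, hn, hkn, rfl⟩
      subst hk
      obtain rfl : n = 1 := by simpa using hkn
      rfl
    · exact ⟨1, 1, one_pos, one_pos, by simp, hv⟩
  refine ⟨k + n * c, n, by omega, hn, ?_, theta_iterate_mech hn c⟩
  simpa using hkn

/-! ### The largest cyclic permutation of a mechanical word -/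

lemma foldl_max_eq {α : Type*} [LinearOrder α] {b : α} (l : List α) {a : α} (hab : a ≤ b)
    (hl : ∀ x ∈ l, x ≤ b) (hb : b ∈ l ∨ a = b) : l.foldl max a = b := by
  induction l generalizing a with
  | nil => simpa using hb
  | cons x l ih =>
    rw [List.foldl_cons]
    rw [List.forall_mem_cons] at hl
    refine ih (max_le hab hl.1) hl.2 ?_
    rcases hb with hb | rfl
    · rcases List.mem_cons.1 hb with rfl | hb
      · exact Or.inr (max_eq_right hab)
      · exact Or.inl hb
    · exact Or.inr (max_eq_left hl.1)

lemma add_mul_mul_div {k n : ℕ} (hn : 0 < n) (c i : ℕ) :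
    ((i + n * c) * k) / n = i * k / n + c * k := by
  rw [add_mul, mul_assoc, Nat.add_mul_div_left _ _ hn]

lemma lowDigit_add_mul {k n : ℕ} (hn : 0 < n) (c i : ℕ) :
    lowDigit k n (i + n * c) = lowDigit k n i := by
  have h : i + n * c + 1 = i + 1 + n * c := by ring
  rw [lowDigit, lowDigit, h, add_mul_mul_div hn, add_mul_mul_div hn,
    Nat.add_sub_add_right]

lemma lowDigit_mod {k n : ℕ} (hn : 0 < n) (i : ℕ) : lowDigit k n (i % n) = lowDigit k n i := by
  conv_rhs => rw [← Nat.mod_add_div i n, lowDigit_add_mul hn]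

/-- An upper mechanical word is a shift of the lower one. -/
lemma exists_upDigit_eq_lowDigit {k n : ℕ} (hn : 0 < n) (hkn : k.Coprime n) :
    ∃ i₀ < n, ∀ j, upDigit k n j = lowDigit k n (i₀ + j) := by
  obtain ⟨i₀, hi₀, hmod⟩ : ∃ i₀ < n, i₀ * k % n = n - 1 := by
    rcases Nat.lt_or_ge 1 n with h1 | h1
    · obtain ⟨a, ha, hmod⟩ := Nat.exists_mul_mod_eq_one_of_coprime hkn h1
      refine ⟨a * (n - 1) % n, Nat.mod_lt _ hn, ?_⟩
      rw [Nat.mod_mul_mod, mul_right_comm, mul_comm a, Nat.mul_mod, hmod, one_mul, Nat.mod_mod]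
      exact Nat.mod_eq_of_lt (by omega)
    · obtain rfl : n = 1 := by omega
      exact ⟨0, one_pos, by simp⟩
  refine ⟨i₀, hi₀, fun j => ?_⟩
  have hshift : ∀ j, (i₀ + j) * k / n = i₀ * k / n + (j * k + n - 1) / n := fun j => by
    have h := Nat.div_add_mod (i₀ * k) n
    have h2 : (i₀ + j) * k = (j * k + n - 1) + n * (i₀ * k / n) := by
      rw [add_mul]
      omega
    rw [h2, Nat.add_mul_div_left _ _ hn, add_comm]
  rw [lowDigit, upDigit, add_assoc, hshift, hshift, Nat.add_sub_add_left]

lemma rotate_mech {k n : ℕ} (hn : 0 < n) (i : ℕ) :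
    (mech k n).rotate i = (List.range n).map fun j => lowDigit k n (i + j) := by
  refine List.ext_getElem (by simp) fun j h1 h2 => ?_
  simp only [List.getElem_rotate, mech, List.getElem_map, List.getElem_range, List.length_map,
    List.length_range]
  rw [lowDigit_mod hn, add_comm]

lemma sum_lowDigit (k n i j : ℕ) :
    ∑ l ∈ Finset.range j, lowDigit k n (i + l) = (i + j) * k / n - i * k / n := by
  induction j with
  | zero => simp
  | succ j ih =>
    have h1 := mul_div_mono k n (Nat.le_add_right i j)
    have h2 : (i + j) * k / n ≤ (i + j + 1) * k / n := mul_div_mono k n (Nat.le_succ _)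
    rw [Finset.sum_range_succ, ih, lowDigit, ← add_assoc]
    omega

lemma ceil_div_mono (k n : ℕ) (j : ℕ) : (j * k + n - 1) / n ≤ ((j + 1) * k + n - 1) / n := by
  refine Nat.div_le_div_right ?_
  rw [add_mul, one_mul]
  omega

lemma mul_le_ceil_div_mul {n : ℕ} (hn : 0 < n) (a : ℕ) : a ≤ (a + n - 1) / n * n := by
  have h1 := Nat.div_add_mod (a + n - 1) n
  have h2 := Nat.mod_lt (a + n - 1) hn
  rw [mul_comm]
  omega

lemma sum_upDigit {k n : ℕ} (hn : 0 < n) (j : ℕ) :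
    ∑ l ∈ Finset.range j, upDigit k n l = (j * k + n - 1) / n := by
  induction j with
  | zero =>
    rw [Finset.sum_range_zero, Nat.div_eq_of_lt]
    omega
  | succ j ih =>
    have h := ceil_div_mono k n j
    rw [Finset.sum_range_succ, ih, upDigit]
    omega

lemma sum_lowDigit_le {k n : ℕ} (hn : 0 < n) (i j : ℕ) :
    ∑ l ∈ Finset.range j, lowDigit k n (i + l) ≤ ∑ l ∈ Finset.range j, upDigit k n l := by
  rw [sum_upDigit hn, sum_lowDigit, Nat.sub_le_iff_le_add', ← Nat.lt_succ_iff,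
    Nat.div_lt_iff_lt_mul hn]
  have h1 : i * k < (i * k / n + 1) * n := Nat.lt_mul_of_div_lt (Nat.lt_succ_self _) hn
  have h2 := mul_le_ceil_div_mul hn (j * k)
  rw [Nat.succ_eq_add_one]
  linarith

lemma maxCyc_mech {k n : ℕ} (hn : 0 < n) (hkn : k.Coprime n) : maxCyc (mech k n) = mechUp k n := by
  obtain ⟨i₀, hi₀, hup⟩ := exists_upDigit_eq_lowDigit hn hkn
  refine foldl_max_eq _ (not_lt.1 (List.not_lt_nil _)) ?_ (Or.inl ?_)
  · intro w hw
    obtain ⟨i, -, rfl⟩ := List.mem_map.1 hw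
    rw [rotate_mech hn]
    by_contra hlt
    rw [not_le, List.lt_iff_exists] at hlt
    rcases hlt with ⟨-, hlen⟩ | ⟨j, h1, h2, heq, hj⟩
    · simp at hlen
    · simp only [mechUp, List.getElem_map, List.getElem_range] at heq hj
      have hle := sum_lowDigit_le (k := k) hn i (j + 1)
      rw [Finset.sum_range_succ, Finset.sum_range_succ,
        Finset.sum_congr rfl fun l hl => heq l (Finset.mem_range.1 hl)] at hle
      omega
  · rw [length_mech]
    refine List.mem_map.2 ⟨i₀, List.mem_range.2 hi₀, ?_⟩
    rw [rotate_mech hn, mechUp]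
    exact List.map_congr_left fun j _ => (hup j).symm

/-! ### The bases attached to a mechanical word -/

lemma natCast_div_eq_floor {k n : ℕ} (hn : 0 < n) (j : ℕ) :
    ((j * k / n : ℕ) : ℝ) = ⌊(j : ℝ) * (k / n)⌋ := by
  have hn' : (0 : ℝ) < n := by exact_mod_cast hn
  have h : ⌊(j : ℝ) * (k / n)⌋ = ((j * k / n : ℕ) : ℤ) := by
    rw [Int.floor_eq_iff, ← mul_div_assoc, le_div_iff₀ hn', div_lt_iff₀ hn']
    constructor
    · exact_mod_cast Nat.div_mul_le_self (j * k) n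
    · exact_mod_cast Nat.lt_mul_of_div_lt (Nat.lt_succ_self _) hn
  rw [h]
  rfl

lemma natCast_div_eq_ceil {k n : ℕ} (hn : 0 < n) (j : ℕ) :
    (((j * k + n - 1) / n : ℕ) : ℝ) = ⌈(j : ℝ) * (k / n)⌉ := by
  have hn' : (0 : ℝ) < n := by exact_mod_cast hn
  have h : ⌈(j : ℝ) * (k / n)⌉ = (((j * k + n - 1) / n : ℕ) : ℤ) := by
    rw [Int.ceil_eq_iff, ← mul_div_assoc, lt_div_iff₀ hn', div_le_iff₀ hn', sub_mul, one_mul,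
      sub_lt_iff_lt_add]
    constructor
    · have h1 := Nat.div_mul_le_self (j * k + n - 1) n
      have h2 : (j * k + n - 1) / n * n < j * k + n := by omega
      exact_mod_cast h2
    · exact_mod_cast mul_le_ceil_div_mul hn (j * k)
  rw [h]
  rfl

lemma getD_map_range {n j : ℕ} (f : ℕ → ℕ) (hj : j < n) :
    ((List.range n).map f).getD j 0 = f j := by
  rw [List.getD_eq_getElem _ _ (by simpa using hj), List.getElem_map, List.getElem_range]

lemma perSeq_mechUp {k n : ℕ} (hn : 0 < n) (hkn : k.Coprime n) :
    perSeq (mechUp k n) = upDigit k n := by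
  obtain ⟨i₀, -, hup⟩ := exists_upDigit_eq_lowDigit hn hkn
  ext i
  rw [perSeq, length_mechUp, mechUp, getD_map_range _ (Nat.mod_lt i hn), hup, hup,
    ← lowDigit_mod hn, Nat.add_mod_mod, lowDigit_mod hn]

lemma perSeq_mech {k n : ℕ} (hn : 0 < n) : perSeq (mech k n) = lowDigit k n := by
  ext i
  rw [perSeq, length_mech, mech, getD_map_range _ (Nat.mod_lt i hn), lowDigit_mod hn]

lemma wplus_mechUp (k N : ℕ) : wplus (mechUp k (N + 1))
    = (List.range N).map (upDigit k (N + 1)) ++ [upDigit k (N + 1) N + 1] := by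
  rw [wplus, mechUp, List.range_succ, List.map_append, List.map_singleton, List.dropLast_concat]
  simp

lemma upDigit_cast {k n : ℕ} (hn : 0 < n) (i : ℕ) :
    (upDigit k n i : ℝ) = (⌈((i + 1 : ℕ) : ℝ) * (k / n)⌉ : ℝ) - ⌈(i : ℝ) * (k / n)⌉ := by
  rw [upDigit, Nat.cast_sub (ceil_div_mono k n i), natCast_div_eq_ceil hn, natCast_div_eq_ceil hn]

lemma lowDigit_cast {k n : ℕ} (hn : 0 < n) (i : ℕ) :
    (lowDigit k n i : ℝ) = (⌊((i + 1 : ℕ) : ℝ) * (k / n)⌋ : ℝ) - ⌊(i : ℝ) * (k / n)⌋ := by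
  rw [lowDigit, Nat.cast_sub (mul_div_mono k n (Nat.le_succ i)), natCast_div_eq_floor hn,
    natCast_div_eq_floor hn]

lemma ceil_eq_floor_add_one {k n j : ℕ} (hkn : k.Coprime n) (hj : 0 < j) (hjn : j < n) :
    (⌈(j : ℝ) * (k / n)⌉ : ℝ) = ⌊(j : ℝ) * (k / n)⌋ + 1 := by
  exact_mod_cast le_antisymm (Int.ceil_le_floor_add_one _) (floor_lt_ceil_of_coprime hkn hj hjn)

/-- The digits of the sequence `L(s)⁺ s^∞` for the lower mechanical word `s` of slope `k/n`. -/
lemma wordSeq_wplus_mech {k n : ℕ} (hn : 0 < n) (hkn : k.Coprime n) (i : ℕ) :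
    (wordSeq (wplus (mechUp k n)) (perSeq (mech k n)) i : ℝ)
      = ((⌊((i + 1 : ℕ) : ℝ) * (k / n)⌋ : ℝ) + if i + 1 = 0 then 0 else 1)
        - ((⌊(i : ℝ) * (k / n)⌋ : ℝ) + if i = 0 then 0 else 1) := by
  obtain ⟨N, rfl⟩ := Nat.exists_eq_succ_of_ne_zero hn.ne'
  rw [Nat.succ_eq_add_one] at *
  have hlow : i < N + 1 → (⌈(i : ℝ) * (k / (N + 1 : ℕ))⌉ : ℝ)
      = (⌊(i : ℝ) * (k / (N + 1 : ℕ))⌋ : ℝ) + if i = 0 then 0 else 1 := fun hi => by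
    split_ifs with h0
    · simp [h0]
    · exact ceil_eq_floor_add_one hkn (Nat.pos_of_ne_zero h0) hi
  rw [wordSeq, wplus_mechUp, perSeq_mech hn]
  have hlen : ((List.range N).map (upDigit k (N + 1)) ++ [upDigit k (N + 1) N + 1]).length
      = N + 1 := by simp
  rw [hlen, if_neg (Nat.succ_ne_zero i)]
  rcases lt_trichotomy i N with hi | rfl | hi
  · rw [if_pos (by omega), List.getD_append _ _ _ _ (by simpa using hi), getD_map_range _ hi,
      upDigit_cast hn, ceil_eq_floor_add_one hkn (Nat.succ_pos i) (by omega), hlow (by omega)]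
  · have hk : ((i + 1 : ℕ) : ℝ) * (k / (i + 1 : ℕ)) = (k : ℤ) := by
      push_cast
      field_simp
    have h := upDigit_cast (k := k) hn i
    rw [hk, Int.ceil_intCast, hlow (by omega)] at h
    rw [if_pos (by omega), List.getD_append_right _ _ _ _ (by simp), hk, Int.floor_intCast]
    simp [h]
    ring
  · rw [if_neg (by omega), if_neg (by omega), add_sub_add_right_eq_sub, ← lowDigit_cast hn,
      ← lowDigit_add_mul hn 1, mul_one, Nat.sub_add_cancel (by omega)]

lemma valSeq_perSeq_maxCyc {β : ℝ} (hβ : 1 < β) {k n : ℕ} (hn : 0 < n) (hkn : k.Coprime n) :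
    valSeq β (perSeq (maxCyc (mech k n))) = upVal β (k / n) := by
  rw [maxCyc_mech hn hkn, perSeq_mechUp hn hkn]
  exact valSeq_eq_abelSum hβ (linGrowth_ceil _) (by simp) (upDigit_cast hn)

lemma valSeq_wordSeq_wplus {β : ℝ} (hβ : 1 < β) {k n : ℕ} (hn : 0 < n) (hkn : k.Coprime n) :
    valSeq β (wordSeq (wplus (maxCyc (mech k n))) (perSeq (mech k n)))
      = lowVal β (k / n) + 1 / β := by
  rw [maxCyc_mech hn hkn, ← abelSum_floor_add_ite hβ]
  exact valSeq_eq_abelSum hβ ((linGrowth_floor _).add linGrowth_ite) (by simp)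
    (wordSeq_wplus_mech hn hkn)

lemma getD_le_sum (w : List ℕ) (i : ℕ) : w.getD i 0 ≤ w.sum := by
  rcases lt_or_ge i w.length with hi | hi
  · rw [List.getD_eq_getElem _ _ hi]
    exact List.single_le_sum (fun _ _ => Nat.zero_le _) _ (List.getElem_mem hi)
  · rw [List.getD_eq_default _ _ hi]
    exact Nat.zero_le _

lemma wordSeq_perSeq_le (w v : List ℕ) (i : ℕ) : wordSeq w (perSeq v) i ≤ w.sum + v.sum := by
  unfold wordSeq perSeq
  split_ifs
  · exact (getD_le_sum w i).trans (Nat.le_add_right _ _)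
  · exact (getD_le_sum v _).trans (Nat.le_add_left _ _)

/-- The base in which a bounded digit sequence represents `1`, and its comparison with
other bases. -/
lemma epsilon_base_spec {c : ℕ → ℕ} {B : ℕ} (hc : ∀ i, c i ≤ B) {a b : ℝ} (ha : 1 < a)
    (hab : a ≤ b) (hca : 1 ≤ valSeq a c) (hcb : valSeq b c ≤ 1) {β : ℝ} (hβ : 1 < β) :
    ((Classical.epsilon fun γ : ℝ => 1 < γ ∧ valSeq γ c = 1) ≤ β ↔ valSeq β c ≤ 1) ∧
      (β ≤ (Classical.epsilon fun γ : ℝ => 1 < γ ∧ valSeq γ c = 1) ↔ 1 ≤ valSeq β c) := by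
  have hpos : ∃ i, 0 < c i := by
    by_contra! h
    have : valSeq a c = 0 := by simp [valSeq, fun i => Nat.le_zero.1 (h i)]
    linarith
  obtain ⟨γ, hγ, hγ1⟩ := intermediate_value_Icc' hab (continuousOn_valSeq (b := b) ha hc)
    (show (1 : ℝ) ∈ Icc _ _ from ⟨hcb, hca⟩)
  have hspec := Classical.epsilon_spec (p := fun γ : ℝ => 1 < γ ∧ valSeq γ c = 1)
    ⟨γ, ha.trans_le hγ.1, hγ1⟩
  set δ := Classical.epsilon fun γ : ℝ => 1 < γ ∧ valSeq γ c = 1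
  have hanti : StrictAntiOn (fun β => valSeq β c) (Ioi 1) := fun x hx y _ hxy =>
    valSeq_lt_valSeq hx hxy hc hpos
  rw [← hspec.2]
  exact ⟨(hanti.le_iff_ge hβ hspec.1).symm, (hanti.le_iff_ge hspec.1 hβ).symm⟩

lemma lowVal_add_lt_one {x : ℝ} (hx : 0 < x) : lowVal (2 * x + 3) x + 1 / (2 * x + 3) < 1 := by
  have h1 := lowVal_le (β := 2 * x + 3) (by linarith) x
  have h2 : x / (2 * x + 3 - 1) ≤ 1 / 2 := by
    rw [div_le_div_iff₀ (by linarith) two_pos]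
    linarith
  have h3 : 1 / (2 * x + 3) < 1 / 2 := one_div_lt_one_div_of_lt two_pos (by linarith)
  linarith

lemma one_le_upVal_one_add {x : ℝ} (hx : 0 < x) : 1 ≤ upVal (1 + x) x := by
  have h := le_upVal (β := 1 + x) (by linarith) x
  rwa [add_sub_cancel_left, div_self hx.ne'] at h

section FareyBases

variable {β : ℝ} {k n : ℕ}

lemma betaL_mech (hβ : 1 < β) (hk : 0 < k) (hn : 0 < n) (hkn : k.Coprime n) :
    (betaL (mech k n) ≤ β ↔ upVal β (k / n) ≤ 1) ∧
      (β ≤ betaL (mech k n) ↔ 1 ≤ upVal β (k / n)) := by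
  have hx : (0 : ℝ) < k / n := by positivity
  rw [← valSeq_perSeq_maxCyc hβ hn hkn]
  refine epsilon_base_spec (c := perSeq (maxCyc (mech k n))) (fun i => getD_le_sum _ _)
    (a := 1 + k / n) (b := 2 * (k / n) + 3) (by linarith) (by linarith) ?_ ?_ hβ
  · rw [valSeq_perSeq_maxCyc (by linarith) hn hkn]
    exact one_le_upVal_one_add hx
  · rw [valSeq_perSeq_maxCyc (by linarith) hn hkn]
    exact (upVal_le_lowVal_add (by linarith) _).trans (lowVal_add_lt_one hx).le

lemma le_betaR_mech (hβ : 1 < β) (hk : 0 < k) (hn : 0 < n) (hkn : k.Coprime n) :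
    β ≤ betaR (mech k n) ↔ 1 ≤ lowVal β (k / n) + 1 / β := by
  have hx : (0 : ℝ) < k / n := by positivity
  rw [← valSeq_wordSeq_wplus hβ hn hkn]
  refine (epsilon_base_spec (wordSeq_perSeq_le _ _) (a := 1 + k / n) (b := 2 * (k / n) + 3)
    (by linarith) (by linarith) ?_ ?_ hβ).2
  · rw [valSeq_wordSeq_wplus (by linarith) hn hkn]
    exact (one_le_upVal_one_add hx).trans (upVal_le_lowVal_add (by linarith) _)
  · rw [valSeq_wordSeq_wplus (by linarith) hn hkn]
    exact (lowVal_add_lt_one hx).le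

end FareyBases

/-- For all `β > 1`, `τ(β) ≤ 1 - 1/β`, with equality iff
`β ∈ E_L = E ∪ {β_ℓ^s : s ∈ F_e}`. -/
theorem tau_le_one_sub_inv (β : ℝ) (hβ : 1 < β) :
    tau β ≤ 1 - 1 / β ∧ (tau β = 1 - 1 / β ↔ β ∈ EL) := by
  refine ⟨tau_le_of_dimH_eq_zero (one_sub_one_div_pos hβ) (dimH_survivor_one_sub_inv hβ),
    fun h => ?_, ?_⟩
  · by_cases hE : β ∈ Eexc
    · exact Or.inl hE
    · have hJ : β ∈ ⋃ s ∈ FareyExt, Jint s := by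
        by_contra hJ
        exact hE ⟨hβ, hJ⟩
      simp only [mem_iUnion, exists_prop] at hJ
      obtain ⟨s, hs, hl, hr⟩ := hJ
      refine Or.inr ⟨s, hs, hl.antisymm' ?_⟩
      obtain ⟨k, n, hk, hn, hkn, rfl⟩ := exists_mech_of_mem_fareyExt hs
      rw [(betaL_mech hβ hk hn hkn).2]
      by_contra! hM
      exact (tau_lt_of_jump hβ hn hkn hM ((le_betaR_mech hβ hk hn hkn).1 hr)).ne h
  · rintro (hE | ⟨s, hs, hβs⟩)
    · rcases exists_upVal_eq_one_or_jump hβ with ⟨a, ha⟩ | ⟨k, n, hk, hn, hkn, hM, hm⟩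
      · exact tau_eq_of_upVal_eq_one hβ ha
      · exact absurd (mem_biUnion (t := Jint) (mech_mem_fareyExt hk hn hkn)
          ⟨(betaL_mech hβ hk hn hkn).1.2 hM.le, (le_betaR_mech hβ hk hn hkn).2 hm⟩) hE.2
    · obtain ⟨k, n, hk, hn, hkn, rfl⟩ := exists_mech_of_mem_fareyExt hs
      have h := betaL_mech hβ hk hn hkn
      exact tau_eq_of_upVal_eq_one hβ (le_antisymm (h.1.1 hβs.ge) (h.2.1 hβs.le))
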